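/- arXiv:2406.06206 — 4 statements merged into one kernel-verified Lean document; each statement's English description precedes it below -/
import Mathlib

section
/- Let f : ℝ → ℝ be the function f(x) = arctan(eˣ). There exist absolute constants c, c′ > 0 such that for any finite nonempty sets X, Y ⊂ ℝ, writing S = f(X − Y) = { arctan(e^(x − y)) : x ∈ X, y ∈ Y } and n = min{|X|, |Y|}, one has |4S − 3S| ≥ c · n^(5/2) / (log n)^(c′) (for n ≥ 2), where 4S − 3S denotes the iterated sumset-difference { s₁ + s₂ + s₃ + s₄ − s₅ − s₆ − s₇ : sᵢ ∈ S }. -/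
open Pointwise

/-!
For increasing sequences `x i` and `v j` let `w i j > 0` be the mixed second differences of the
array `F i j = f (x i + v j)`, where `f` is increasing and convex. The increments
`F i (j + 1) - F i j` grow with `i`, with successive differences `w i j`, so translating them by
the last row of `F` cuts the line into disjoint intervals of lengths `w i j`. As the left endpoint
of such an interval plus any `w i' j'` lies in `4S - 3S`, the interval contains at least as many
points of `4S - 3S` as the rank of `w i j` among all the mixed differences, and it remains to bound
the sum of these ranks from below.

If `log f''` is strictly concave, then the pairs `(w i j, w (i + 1) j)` are distinct for fixed `i`:
two equal pairs would, by Rolle's theorem, produce equal increments of `f'` at two different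
abscissae, which Cauchy's mean value theorem rules out. Hence at most `q ^ 2` columns have rank
below `q` in both rows `i` and `i + 1`, and `q ∼ √n` gives a sum of ranks of order `n ^ (5 / 2)`.

For `f x = arctan (exp x)` all of this applies on `(-∞, 0]`. Since `f (-x) = π / 2 - f x`,
interchanging `X` and `Y` replaces `4S - 3S` by a reflected copy of itself, and comparing the
medians of `X` and `Y` then provides large subsets with nonpositive differences.
-/

section Rank

open Finset

variable {α ι : Type*} [LinearOrder α]

/-- The rank of `v` in `W`: the number of elements of `W` that are at most `v`. Elements of `W`
have rank at least `1`. -/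
def rankIn (W : Finset α) (v : α) : ℕ := #{u ∈ W | u ≤ v}

lemma strictMonoOn_rankIn (W : Finset α) : StrictMonoOn (rankIn W) W := by
  intro u _ v hv huv
  have hsub : {t ∈ W | t ≤ u} ⊆ {t ∈ W | t ≤ v} :=
    monotone_filter_right W fun _ _ ht => ht.trans huv.le
  refine card_lt_card ((ssubset_iff_of_subset hsub).2 ⟨v, ?_, ?_⟩)
  · exact mem_filter.2 ⟨hv, le_rfl⟩
  · simp [huv]

lemma card_filter_rankIn_lt_le (W : Finset α) (q : ℕ) : #{v ∈ W | rankIn W v < q} ≤ q := by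
  have hinj : Set.InjOn (rankIn W) ({v ∈ W | rankIn W v < q} : Finset α) :=
    (strictMonoOn_rankIn W).injOn.mono (coe_subset.2 (filter_subset _ W))
  simpa using card_le_card_of_injOn (t := range q) (rankIn W) (by simp [Set.MapsTo]) hinj

variable {W : Finset α} {C : Finset ι} {a b : ι → α}

lemma card_filter_rankIn_lt_and_rankIn_lt_le (ha : ∀ j ∈ C, a j ∈ W) (hb : ∀ j ∈ C, b j ∈ W)
    (hab : Set.InjOn (fun j => (a j, b j)) C) (q : ℕ) :
    #{j ∈ C | rankIn W (a j) < q ∧ rankIn W (b j) < q} ≤ q ^ 2 := by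
  set L := {v ∈ W | rankIn W v < q}
  calc #{j ∈ C | rankIn W (a j) < q ∧ rankIn W (b j) < q}
      ≤ #(L ×ˢ L) := card_le_card_of_injOn (fun j => (a j, b j))
        (fun j hj => by simp_all [L]) (hab.mono (coe_subset.2 (filter_subset _ C)))
    _ = #L * #L := card_product _ _
    _ ≤ q ^ 2 := by
      rw [sq]
      exact Nat.mul_le_mul (card_filter_rankIn_lt_le W q) (card_filter_rankIn_lt_le W q)

lemma mul_card_sub_sq_le_sum_rankIn (ha : ∀ j ∈ C, a j ∈ W) (hb : ∀ j ∈ C, b j ∈ W)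
    (hab : Set.InjOn (fun j => (a j, b j)) C) (q : ℕ) :
    q * (#C - q ^ 2) ≤ ∑ j ∈ C, (rankIn W (a j) + rankIn W (b j)) := by
  have hlow := card_filter_rankIn_lt_and_rankIn_lt_le ha hb hab q
  have hsplit := card_filter_add_card_filter_not (s := C)
    fun j => rankIn W (a j) < q ∧ rankIn W (b j) < q
  set H := {j ∈ C | ¬(rankIn W (a j) < q ∧ rankIn W (b j) < q)}
  calc q * (#C - q ^ 2) ≤ q * #H := Nat.mul_le_mul_left q (by omega)
    _ = ∑ _j ∈ H, q := by rw [sum_const, smul_eq_mul, mul_comm]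
    _ ≤ ∑ j ∈ H, (rankIn W (a j) + rankIn W (b j)) :=
      sum_le_sum fun j hj => by have := (mem_filter.1 hj).2; omega
    _ ≤ _ := sum_le_sum_of_subset (filter_subset _ _)

lemma sum_range_two_mul {M : Type*} [AddCommMonoid M] (g : ℕ → M) (r : ℕ) :
    ∑ i ∈ range (2 * r), g i = ∑ k ∈ range r, (g (2 * k) + g (2 * k + 1)) := by
  induction r with
  | zero => simp
  | succ r ih => rw [Nat.mul_succ, sum_range_succ, sum_range_succ, ih, sum_range_succ, add_assoc]

theorem mul_mul_sub_sq_le_sum_rankIn {w : ℕ → ℕ → α} {r n : ℕ}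
    (hW : ∀ i < 2 * r, ∀ j < n, w i j ∈ W)
    (hw : ∀ k < r, Set.InjOn (fun j => (w (2 * k) j, w (2 * k + 1) j)) (Set.Iio n)) (q : ℕ) :
    r * (q * (n - q ^ 2)) ≤ ∑ i ∈ range (2 * r), ∑ j ∈ range n, rankIn W (w i j) := by
  calc r * (q * (n - q ^ 2)) = ∑ _k ∈ range r, q * (n - q ^ 2) := by simp
    _ ≤ ∑ k ∈ range r, ∑ j ∈ range n, (rankIn W (w (2 * k) j) + rankIn W (w (2 * k + 1) j)) := by
      refine sum_le_sum fun k hk => ?_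
      have hk := mem_range.1 hk
      simpa using mul_card_sub_sq_le_sum_rankIn (C := range n)
        (fun j hj => hW (2 * k) (by omega) j (mem_range.1 hj))
        (fun j hj => hW (2 * k + 1) (by omega) j (mem_range.1 hj)) (by simpa using hw k hk) q
    _ = _ := by simp only [sum_range_two_mul, sum_add_distrib]

end Rank

section Squeezing

open Finset

variable {G : Type*} [AddCommGroup G]

/-- The mixed second difference `Δ₁Δ₂F` at `(i, j)`. -/
def mixedDiff (F : ℕ → ℕ → G) (i j : ℕ) : G :=
  F (i + 1) (j + 1) - F (i + 1) j - (F i (j + 1) - F i j)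

/-- The endpoints of the squeezed intervals: the increments of `F i` from `j` to `j + 1`, for
`i = 0, …, m`, are translated by `F m j`, so that the last one becomes `F m (j + 1)`. -/
def squeezePoint (F : ℕ → ℕ → G) (m i j : ℕ) : G := F m j + (F i (j + 1) - F i j)

lemma squeezePoint_add_mixedDiff (F : ℕ → ℕ → G) (m i j : ℕ) :
    squeezePoint F m i j + mixedDiff F i j = squeezePoint F m (i + 1) j := by
  unfold squeezePoint mixedDiff
  abel

lemma squeezePoint_self (F : ℕ → ℕ → G) (m j : ℕ) : squeezePoint F m m j = F m (j + 1) := by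
  unfold squeezePoint
  abel

lemma squeezePoint_add_mixedDiff_mem {F : ℕ → ℕ → G} {m n : ℕ} {S : Set G}
    (hS : ∀ i ≤ m, ∀ j ≤ n, F i j ∈ S) {i i' j j' : ℕ} (hi : i < m) (hj : j < n) (hi' : i' < m)
    (hj' : j' < n) : squeezePoint F m i j + mixedDiff F i' j' ∈ S + S + S + S - S - S - S := by
  have hsum : squeezePoint F m i j + mixedDiff F i' j' = F m j + F i (j + 1) +
      F (i' + 1) (j' + 1) + F i' j' - F i j - F (i' + 1) j' - F i' (j' + 1) := by
    unfold squeezePoint mixedDiff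
    abel
  rw [hsum]
  refine Set.sub_mem_sub (Set.sub_mem_sub (Set.sub_mem_sub (Set.add_mem_add (Set.add_mem_add
    (Set.add_mem_add ?_ ?_) ?_) ?_) ?_) ?_) ?_ <;> apply hS <;> omega

variable [LinearOrder G] [IsOrderedAddMonoid G] {F : ℕ → ℕ → G} {m n : ℕ}

lemma monotoneOn_squeezePoint {j : ℕ} (hpos : ∀ i < m, 0 ≤ mixedDiff F i j) :
    MonotoneOn (fun i => squeezePoint F m i j) (Set.Iic m) := by
  refine monotoneOn_of_le_succ Set.ordConnected_Iic fun i _ _ hi => ?_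
  rw [Nat.succ_eq_succ, ← squeezePoint_add_mixedDiff]
  exact le_add_of_nonneg_right (hpos i hi)

lemma le_squeezePoint {i j : ℕ} (hF : F 0 j ≤ F 0 (j + 1))
    (hpos : ∀ i < m, 0 ≤ mixedDiff F i j) (hi : i ≤ m) : F m j ≤ squeezePoint F m i j :=
  calc F m j ≤ squeezePoint F m 0 j := le_add_of_nonneg_right (sub_nonneg.2 hF)
    _ ≤ squeezePoint F m i j := monotoneOn_squeezePoint hpos (Nat.zero_le m) hi (Nat.zero_le i)

lemma monotoneOn_last_row (hF : ∀ j < n, F 0 j ≤ F 0 (j + 1))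
    (hpos : ∀ i < m, ∀ j < n, 0 ≤ mixedDiff F i j) : MonotoneOn (F m) (Set.Iic n) := by
  refine monotoneOn_of_le_succ Set.ordConnected_Iic fun j _ _ hj => ?_
  rw [Nat.succ_eq_succ, ← squeezePoint_self F m]
  exact le_squeezePoint (hF j hj) (fun i hi => hpos i hi j hj) le_rfl

lemma squeezePoint_succ_le_of_lex (hF : ∀ j < n, F 0 j ≤ F 0 (j + 1))
    (hpos : ∀ i < m, ∀ j < n, 0 ≤ mixedDiff F i j) {i i' j j' : ℕ} (hi : i < m) (hi' : i' < m)
    (hj' : j' < n) (hlex : j < j' ∨ j = j' ∧ i < i') :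
    squeezePoint F m (i + 1) j ≤ squeezePoint F m i' j' := by
  have hmono {k : ℕ} (hk : k < n) := monotoneOn_squeezePoint fun i hi => hpos i hi k hk
  rcases hlex with hj | ⟨rfl, hii'⟩
  · calc squeezePoint F m (i + 1) j ≤ squeezePoint F m m j :=
          hmono (hj.trans hj') hi Set.self_mem_Iic hi
      _ = F m (j + 1) := squeezePoint_self F m j
      _ ≤ F m j' := monotoneOn_last_row hF hpos (hj.trans_le hj'.le) hj'.le hj
      _ ≤ squeezePoint F m i' j' :=
        le_squeezePoint (hF j' hj') (fun i hi => hpos i hi j' hj') hi'.le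
  · exact hmono hj' hi hi'.le hii'

lemma pairwiseDisjoint_Ioc_squeezePoint (hF : ∀ j < n, F 0 j ≤ F 0 (j + 1))
    (hpos : ∀ i < m, ∀ j < n, 0 ≤ mixedDiff F i j) :
    (range m ×ˢ range n : Set (ℕ × ℕ)).PairwiseDisjoint
      fun p => Set.Ioc (squeezePoint F m p.1 p.2) (squeezePoint F m (p.1 + 1) p.2) := by
  rintro ⟨i, j⟩ hp ⟨i', j'⟩ hp' hne
  simp only [Set.mem_prod, mem_coe, mem_range] at hp hp'
  have hlex : (j < j' ∨ j = j' ∧ i < i') ∨ (j' < j ∨ j' = j ∧ i' < i) := by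
    have : ¬(i = i' ∧ j = j') := by simpa using hne
    omega
  rcases hlex with h | h
  · exact Set.Ioc_disjoint_Ioc_of_le (squeezePoint_succ_le_of_lex hF hpos hp.1 hp'.1 hp'.2 h)
  · exact (Set.Ioc_disjoint_Ioc_of_le
      (squeezePoint_succ_le_of_lex hF hpos hp'.1 hp.1 hp.2 h)).symm

theorem sum_rankIn_mixedDiff_le_card (hF : ∀ j < n, F 0 j ≤ F 0 (j + 1))
    (hpos : ∀ i < m, ∀ j < n, 0 ≤ mixedDiff F i j) {W T : Finset G} (hW : ∀ v ∈ W, 0 < v)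
    (hT : ∀ i < m, ∀ j < n, ∀ v ∈ W, squeezePoint F m i j + v ∈ T) :
    ∑ i ∈ range m, ∑ j ∈ range n, rankIn W (mixedDiff F i j) ≤ #T := by
  set A : ℕ × ℕ → Finset G := fun p =>
    {v ∈ W | v ≤ mixedDiff F p.1 p.2}.image (squeezePoint F m p.1 p.2 + ·)
  have hcard (p : ℕ × ℕ) : #(A p) = rankIn W (mixedDiff F p.1 p.2) :=
    card_image_of_injective _ (add_right_injective _)
  have hIoc (p : ℕ × ℕ) :
      (A p : Set G) ⊆ Set.Ioc (squeezePoint F m p.1 p.2) (squeezePoint F m (p.1 + 1) p.2) := by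
    intro z hz
    obtain ⟨v, hv, rfl⟩ := mem_image.1 hz
    obtain ⟨hvW, hvle⟩ := mem_filter.1 hv
    rw [← squeezePoint_add_mixedDiff]
    exact ⟨lt_add_of_pos_right _ (hW v hvW), by gcongr⟩
  have hdisj : (range m ×ˢ range n : Set (ℕ × ℕ)).PairwiseDisjoint A := fun p hp p' hp' hne =>
    disjoint_coe.1 <| (pairwiseDisjoint_Ioc_squeezePoint hF hpos hp hp' hne).mono (hIoc p) (hIoc p')
  calc ∑ i ∈ range m, ∑ j ∈ range n, rankIn W (mixedDiff F i j)
      = ∑ p ∈ range m ×ˢ range n, #(A p) := by simp_rw [hcard, sum_product]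
    _ = #((range m ×ˢ range n).biUnion A) := (card_biUnion (by simpa using hdisj)).symm
    _ ≤ #T := card_le_card <| biUnion_subset.2 fun p hp z hz => by
      obtain ⟨v, hv, rfl⟩ := mem_image.1 hz
      obtain ⟨hi, hj⟩ := mem_product.1 hp
      exact hT p.1 (mem_range.1 hi) p.2 (mem_range.1 hj) v (mem_filter.1 hv).1

theorem mul_mul_sub_sq_le_ncard_of_mixedDiff {r : ℕ} (hF : ∀ j < n, F 0 j ≤ F 0 (j + 1))
    (hpos : ∀ i < 2 * r, ∀ j < n, 0 < mixedDiff F i j)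
    (hinj : ∀ k < r,
      Set.InjOn (fun j => (mixedDiff F (2 * k) j, mixedDiff F (2 * k + 1) j)) (Set.Iio n))
    {S : Set G} (hfin : S.Finite) (hS : ∀ i ≤ 2 * r, ∀ j ≤ n, F i j ∈ S) (q : ℕ) :
    r * (q * (n - q ^ 2)) ≤ (S + S + S + S - S - S - S).ncard := by
  have hTfin : (S + S + S + S - S - S - S).Finite :=
    (((((hfin.add hfin).add hfin).add hfin).sub hfin).sub hfin).sub hfin
  set W : Finset G := (range (2 * r) ×ˢ range n).image fun p => mixedDiff F p.1 p.2
  have hW {v : G} (hv : v ∈ W) : ∃ i < 2 * r, ∃ j < n, mixedDiff F i j = v := by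
    simpa [W, and_assoc] using hv
  rw [Set.ncard_eq_toFinset_card _ hTfin]
  refine (mul_mul_sub_sq_le_sum_rankIn (W := W) (fun i hi j hj => ?_) hinj q).trans
    (sum_rankIn_mixedDiff_le_card hF (fun i hi j hj => (hpos i hi j hj).le) (fun v hv => ?_)
      fun i hi j hj v hv => ?_)
  · exact mem_image_of_mem (fun p : ℕ × ℕ => mixedDiff F p.1 p.2)
      (mk_mem_product (mem_range.2 hi) (mem_range.2 hj))
  · obtain ⟨i, hi, j, hj, rfl⟩ := hW hv
    exact hpos i hi j hj
  · obtain ⟨i', hi', j', hj', rfl⟩ := hW hv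
    exact hTfin.mem_toFinset.2 (squeezePoint_add_mixedDiff_mem hS hi hj hi' hj')

end Squeezing

section Convexity

lemma add_lt_add_of_strictConvexOn {𝕜 : Type*} [Field 𝕜] [LinearOrder 𝕜] [IsStrictOrderedRing 𝕜]
    {s : Set 𝕜} {f : 𝕜 → 𝕜} (hf : StrictConvexOn 𝕜 s f) {p u v t : 𝕜} (hp : p ∈ s) (ht : t ∈ s)
    (hpu : p < u) (hut : u < t) (huv : u + v = p + t) : f u + f v < f p + f t := by
  have hd : 0 < t - p := by linarith
  have hα : 0 < (t - u) / (t - p) := div_pos (by linarith) hd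
  have hβ : 0 < (u - p) / (t - p) := div_pos (by linarith) hd
  have hαβ : (t - u) / (t - p) + (u - p) / (t - p) = 1 := by field_simp; ring
  have hu : (t - u) / (t - p) * p + (u - p) / (t - p) * t = u := by field_simp; ring
  have hv : (u - p) / (t - p) * p + (t - u) / (t - p) * t = v := by
    rw [eq_sub_of_add_eq' huv]; field_simp; ring
  have h₁ := hf.2 hp ht (hpu.trans hut).ne hα hβ hαβ
  have h₂ := hf.2 hp ht (hpu.trans hut).ne hβ hα (by rw [add_comm, hαβ])
  simp only [smul_eq_mul, hu, hv] at h₁ h₂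
  linear_combination h₁ + h₂ + (f p + f t) * hαβ

lemma mul_lt_mul_of_strictConcaveOn_log {s : Set ℝ} {g : ℝ → ℝ} (hpos : ∀ x ∈ s, 0 < g x)
    (hg : StrictConcaveOn ℝ s fun x => Real.log (g x)) {p u v t : ℝ} (hp : p ∈ s) (ht : t ∈ s)
    (hpu : p < u) (hut : u < t) (huv : u + v = p + t) : g p * g t < g u * g v := by
  have hs := hg.1.ordConnected.out hp ht
  have hgu := hpos u (hs ⟨hpu.le, hut.le⟩)
  have hgv := hpos v (hs ⟨by linarith, by linarith⟩)
  have h := add_lt_add_of_strictConvexOn hg.neg hp ht hpu hut huv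
  simp only [Pi.neg_apply] at h
  rw [← Real.log_lt_log_iff (mul_pos (hpos p hp) (hpos t ht)) (mul_pos hgu hgv),
    Real.log_mul (hpos p hp).ne' (hpos t ht).ne', Real.log_mul hgu.ne' hgv.ne']
  linarith

variable {s : Set ℝ} {f f' f'' : ℝ → ℝ}

lemma strictMonoOn_of_hasDerivAt_pos (hs : Convex ℝ s) (hf : ∀ x ∈ s, HasDerivAt f (f' x) x)
    (hpos : ∀ x ∈ interior s, 0 < f' x) : StrictMonoOn f s :=
  strictMonoOn_of_hasDerivWithinAt_pos hs
    (HasDerivAt.continuousOn hf) (fun x hx => (hf x (interior_subset hx)).hasDerivWithinAt) hpos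

lemma strictConvexOn_of_hasDerivAt2_pos (hs : Convex ℝ s) (hf : ∀ x ∈ s, HasDerivAt f (f' x) x)
    (hf' : ∀ x ∈ s, HasDerivAt f' (f'' x) x) (hpos : ∀ x ∈ interior s, 0 < f'' x) :
    StrictConvexOn ℝ s f := by
  have hmono : StrictMonoOn f' (interior s) :=
    (strictMonoOn_of_hasDerivAt_pos hs hf' hpos).mono interior_subset
  exact (hmono.congr fun x hx => (hf x (interior_subset hx)).deriv.symm).strictConvexOn_of_deriv hs
    (HasDerivAt.continuousOn hf)

lemma exists_increment_mul_deriv_eq {x x' b a : ℝ} (hba : b < a)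
    (h : ∀ y ∈ Set.Icc b a, HasDerivAt f (f' (x + y)) (x + y))
    (h' : ∀ y ∈ Set.Icc b a, HasDerivAt f (f' (x' + y)) (x' + y)) :
    ∃ c ∈ Set.Ioo b a,
      (f (x' + a) - f (x' + b)) * f' (x + c) = (f (x + a) - f (x + b)) * f' (x' + c) :=
  have hx y (hy : y ∈ Set.Icc b a) := (h y hy).comp_const_add x y
  have hx' y (hy : y ∈ Set.Icc b a) := (h' y hy).comp_const_add x' y
  exists_ratio_hasDerivAt_eq_ratio_slope _ _ hba (HasDerivAt.continuousOn hx)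
    (fun y hy => hx y (Set.Ioo_subset_Icc_self hy)) _ _ (HasDerivAt.continuousOn hx')
    (fun y hy => hx' y (Set.Ioo_subset_Icc_self hy))

/- Otherwise, by Cauchy's mean value theorem, both `f' (x' + c) / f' (x + c)` and
`f' (x' + d) / f' (x + d)`, for some `c < d`, would be the ratio of the common increments of `f` at
`x'` and at `x`; but this quotient is strictly decreasing in `c` when `f'` is strictly
log-concave. -/
lemma increments_ne_of_strictConcaveOn_log_deriv (hs : Convex ℝ s)
    (hf : ∀ x ∈ s, HasDerivAt f (f' x) x) (hpos : ∀ x ∈ interior s, 0 < f' x)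
    (hlog : StrictConcaveOn ℝ (interior s) fun x => Real.log (f' x))
    {x x' b a b' a' : ℝ} (hx : x < x') (hba : b < a) (hab' : a ≤ b') (hba' : b' < a')
    (hmin : x + b ∈ s) (hmax : x' + a' ∈ s)
    (h : f (x + a) - f (x + b) = f (x + a') - f (x + b')) :
    f (x' + a) - f (x' + b) ≠ f (x' + a') - f (x' + b') := by
  intro h'
  have hmem {z : ℝ} (h₁ : x + b ≤ z) (h₂ : z ≤ x' + a') : z ∈ s :=
    hs.ordConnected.out hmin hmax ⟨h₁, h₂⟩
  have hint {z : ℝ} (h₁ : x + b < z) (h₂ : z < x' + a') : z ∈ interior s :=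
    interior_maximal (fun _ hz => hmem hz.1.le hz.2.le) isOpen_Ioo ⟨h₁, h₂⟩
  obtain ⟨c, hc, hceq⟩ := exists_increment_mul_deriv_eq (f := f) (f' := f') (x := x) (x' := x') hba
    (fun y hy => hf _ (hmem (by linarith [hy.1]) (by linarith [hy.2])))
    (fun y hy => hf _ (hmem (by linarith [hy.1]) (by linarith [hy.2])))
  obtain ⟨d, hd, hdeq⟩ := exists_increment_mul_deriv_eq (f := f) (f' := f') (x := x) (x' := x') hba'
    (fun y hy => hf _ (hmem (by linarith [hy.1]) (by linarith [hy.2])))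
    (fun y hy => hf _ (hmem (by linarith [hy.1]) (by linarith [hy.2])))
  rw [← h, ← h'] at hdeq
  have hlt : f' (x + c) * f' (x' + d) < f' (x + d) * f' (x' + c) :=
    mul_lt_mul_of_strictConcaveOn_log hpos hlog (hint (by linarith [hc.1]) (by linarith [hc.2]))
      (hint (by linarith [hd.1]) (by linarith [hd.2])) (by linarith [hc.2, hd.1]) (by linarith)
      (by ring)
  have hincr : 0 < f (x + a) - f (x + b) :=
    sub_pos.2 <| strictMonoOn_of_hasDerivAt_pos hs hf hpos hmin
      (hmem (by linarith) (by linarith)) (by linarith)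
  refine (mul_lt_mul_of_pos_left hlt hincr).ne ?_
  linear_combination f' (x + d) * hceq - f' (x + c) * hdeq

lemma exists_increment_eq_of_mixed_increment_eq {y z a b a' b' : ℝ} (hyz : y < z)
    (hf : ∀ e ∈ ({a, b, a', b'} : Set ℝ), ∀ t ∈ Set.Icc y z, HasDerivAt f (f' (t + e)) (t + e))
    (heq : f (z + a) - f (z + b) - (f (y + a) - f (y + b)) =
      f (z + a') - f (z + b') - (f (y + a') - f (y + b'))) :
    ∃ ξ ∈ Set.Ioo y z, f' (ξ + a) - f' (ξ + b) = f' (ξ + a') - f' (ξ + b') := by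
  have hderiv e (he : e ∈ ({a, b, a', b'} : Set ℝ)) t (ht : t ∈ Set.Icc y z) :
      HasDerivAt (fun t => f (t + e)) (f' (t + e)) t := (hf e he t ht).comp_add_const t e
  have hderiv₂ t (ht : t ∈ Set.Icc y z) :=
    ((hderiv a (by simp) t ht).sub (hderiv b (by simp) t ht)).sub
      ((hderiv a' (by simp) t ht).sub (hderiv b' (by simp) t ht))
  obtain ⟨ξ, hξ, hzero⟩ := exists_hasDerivAt_eq_zero hyz (HasDerivAt.continuousOn hderiv₂)
    (by simp only [Pi.sub_apply]; linarith) fun t ht => hderiv₂ t (Set.Ioo_subset_Icc_self ht)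
  exact ⟨ξ, hξ, sub_eq_zero.1 hzero⟩

lemma mixed_increments_ne_of_strictConcaveOn_log_deriv2 (hs : Convex ℝ s)
    (hf : ∀ x ∈ s, HasDerivAt f (f' x) x) (hf' : ∀ x ∈ s, HasDerivAt f' (f'' x) x)
    (hpos : ∀ x ∈ interior s, 0 < f'' x)
    (hlog : StrictConcaveOn ℝ (interior s) fun x => Real.log (f'' x))
    {x₁ x₂ x₃ x₄ b a b' a' : ℝ} (hx₁₂ : x₁ < x₂) (hx₂₃ : x₂ ≤ x₃) (hx₃₄ : x₃ < x₄)
    (hba : b < a) (hab' : a ≤ b') (hba' : b' < a') (hmin : x₁ + b ∈ s) (hmax : x₄ + a' ∈ s)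
    (h : f (x₂ + a) - f (x₂ + b) - (f (x₁ + a) - f (x₁ + b)) =
      f (x₂ + a') - f (x₂ + b') - (f (x₁ + a') - f (x₁ + b'))) :
    f (x₄ + a) - f (x₄ + b) - (f (x₃ + a) - f (x₃ + b)) ≠
      f (x₄ + a') - f (x₄ + b') - (f (x₃ + a') - f (x₃ + b')) := by
  intro h'
  have hmem {z : ℝ} (h₁ : x₁ + b ≤ z) (h₂ : z ≤ x₄ + a') : z ∈ s :=
    hs.ordConnected.out hmin hmax ⟨h₁, h₂⟩
  have hderiv e (he : e ∈ ({a, b, a', b'} : Set ℝ)) t (ht : t ∈ Set.Icc x₁ x₄) :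
      HasDerivAt f (f' (t + e)) (t + e) := by
    have hbe : e ∈ Set.Icc b a' := by
      rcases he with rfl | rfl | rfl | rfl <;> constructor <;> linarith
    exact hf _ (hmem (add_le_add ht.1 hbe.1) (add_le_add ht.2 hbe.2))
  obtain ⟨ξ, hξ, heq⟩ := exists_increment_eq_of_mixed_increment_eq hx₁₂
    (fun e he t ht => hderiv e he t ⟨ht.1, ht.2.trans (by linarith)⟩) h
  obtain ⟨ξ', hξ', heq'⟩ := exists_increment_eq_of_mixed_increment_eq hx₃₄
    (fun e he t ht => hderiv e he t ⟨le_trans (by linarith) ht.1, ht.2⟩) h'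
  exact increments_ne_of_strictConcaveOn_log_deriv hs hf' hpos hlog
    (hξ.2.trans_le (hx₂₃.trans hξ'.1.le)) hba hab' hba'
    (hmem (by linarith [hξ.1]) (by linarith [hξ.2]))
    (hmem (by linarith [hξ'.1]) (by linarith [hξ'.2])) heq heq'

end Convexity

section Grid

open Finset

variable {s : Set ℝ} {f f' f'' : ℝ → ℝ}

lemma mixedDiff_pos_of_strictConvexOn (hf : StrictConvexOn ℝ s f) {x v : ℕ → ℝ} {i j : ℕ}
    (hx : x i < x (i + 1)) (hv : v j < v (j + 1)) (hmin : x i + v j ∈ s)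
    (hmax : x (i + 1) + v (j + 1) ∈ s) : 0 < mixedDiff (fun i j => f (x i + v j)) i j := by
  have h := add_lt_add_of_strictConvexOn hf hmin hmax (u := x (i + 1) + v j)
    (v := x i + v (j + 1)) (by linarith) (by linarith) (by ring)
  unfold mixedDiff
  linarith

lemma injOn_mixedDiff_pair_of_strictConcaveOn_log_deriv2 (hs : Convex ℝ s)
    (hf : ∀ x ∈ s, HasDerivAt f (f' x) x) (hf' : ∀ x ∈ s, HasDerivAt f' (f'' x) x)
    (hpos : ∀ x ∈ interior s, 0 < f'' x)
    (hlog : StrictConcaveOn ℝ (interior s) fun x => Real.log (f'' x))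
    {x v : ℕ → ℝ} {i n : ℕ} (hx : x i < x (i + 1)) (hx' : x (i + 1) < x (i + 2))
    (hv : StrictMonoOn v (Set.Iic n))
    (hmem : ∀ j ≤ n, x i + v j ∈ s ∧ x (i + 2) + v j ∈ s) :
    Set.InjOn (fun j => (mixedDiff (fun i j => f (x i + v j)) i j,
      mixedDiff (fun i j => f (x i + v j)) (i + 1) j)) (Set.Iio n) := by
  intro j hj j' hj' heq
  obtain ⟨h, h'⟩ := Prod.mk.inj heq
  have hlt {j : ℕ} (hj : j < n) : v j < v (j + 1) := hv hj.le hj (Nat.lt_succ_self j)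
  rcases lt_trichotomy j j' with hjj | hjj | hjj
  · exact absurd h' <| mixed_increments_ne_of_strictConcaveOn_log_deriv2 hs hf hf' hpos hlog hx
      le_rfl hx' (hlt hj) (hv.monotoneOn (hjj.trans hj') (Set.Iio_subset_Iic_self hj') hjj)
      (hlt hj') (hmem j hj.le).1 (hmem (j' + 1) hj').2 h
  · exact hjj
  · exact absurd h'.symm <| mixed_increments_ne_of_strictConcaveOn_log_deriv2 hs hf hf' hpos hlog
      hx le_rfl hx' (hlt hj') (hv.monotoneOn (hjj.trans hj) (Set.Iio_subset_Iic_self hj) hjj)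
      (hlt hj) (hmem j' hj'.le).1 (hmem (j + 1) hj).2 h.symm

lemma exists_strictMonoOn_Iic_of_lt_card {α : Type*} [LinearOrder α] {A : Finset α} {k : ℕ}
    (h : k < #A) : ∃ x : ℕ → α, StrictMonoOn x (Set.Iic k) ∧ ∀ i, x i ∈ A := by
  refine ⟨fun i => A.orderEmbOfCardLe h (Fin.ofNat (k + 1) i), fun i hi j hj hij => ?_,
    fun i => orderEmbOfCardLe_mem A h _⟩
  refine (A.orderEmbOfCardLe h).strictMono ?_
  rw [Fin.lt_def, Fin.val_ofNat, Fin.val_ofNat, Nat.mod_eq_of_lt (Nat.lt_succ_of_le hi),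
    Nat.mod_eq_of_lt (Nat.lt_succ_of_le hj)]
  exact hij

theorem mul_mul_sub_sq_le_ncard_of_image_add_subset (hs : Convex ℝ s)
    (hf : ∀ x ∈ s, HasDerivAt f (f' x) x) (hf' : ∀ x ∈ s, HasDerivAt f' (f'' x) x)
    (hmono : MonotoneOn f s) (hpos : ∀ x ∈ interior s, 0 < f'' x)
    (hlog : StrictConcaveOn ℝ (interior s) fun x => Real.log (f'' x))
    {A B : Finset ℝ} {r n : ℕ} (hA : 2 * r < #A) (hB : n < #B) (hAB : (A + B : Set ℝ) ⊆ s)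
    {S : Set ℝ} (hfin : S.Finite) (hS : f '' (A + B) ⊆ S) (q : ℕ) :
    r * (q * (n - q ^ 2)) ≤ (S + S + S + S - S - S - S).ncard := by
  obtain ⟨x, hx, hxA⟩ := exists_strictMonoOn_Iic_of_lt_card hA
  obtain ⟨v, hv, hvB⟩ := exists_strictMonoOn_Iic_of_lt_card hB
  have hmem i j : x i + v j ∈ s := hAB (Set.add_mem_add (hxA i) (hvB j))
  have hlt_x {i : ℕ} (hi : i < 2 * r) : x i < x (i + 1) := hx hi.le hi (Nat.lt_succ_self i)
  have hlt_v {j : ℕ} (hj : j < n) : v j < v (j + 1) := hv hj.le hj (Nat.lt_succ_self j)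
  refine mul_mul_sub_sq_le_ncard_of_mixedDiff (F := fun i j => f (x i + v j))
    (fun j hj => hmono (hmem 0 j) (hmem 0 (j + 1)) (by linarith [hlt_v hj])) (fun i hi j hj => ?_)
    (fun k hk => ?_) hfin
    (fun i _ j _ => hS (Set.mem_image_of_mem f (Set.add_mem_add (hxA i) (hvB j)))) q
  · exact mixedDiff_pos_of_strictConvexOn (strictConvexOn_of_hasDerivAt2_pos hs hf hf' hpos)
      (hlt_x hi) (hlt_v hj) (hmem i j) (hmem (i + 1) (j + 1))
  · exact injOn_mixedDiff_pair_of_strictConcaveOn_log_deriv2 hs hf hf' hpos hlog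
      (hlt_x (by omega)) (hlt_x (by omega)) hv fun j _ => ⟨hmem _ j, hmem _ j⟩

end Grid

section Reflection

open Finset

lemma exists_lt_card_filter_le_and_lt_card_filter_ge {α : Type*} [LinearOrder α] {X : Finset α}
    {k : ℕ} (h : 2 * k < #X) : ∃ t, k < #{x ∈ X | x ≤ t} ∧ k < #{x ∈ X | t ≤ x} := by
  obtain ⟨x, hx, hxX⟩ := exists_strictMonoOn_Iic_of_lt_card h
  have hcard {a b : ℕ} (hb : b ≤ 2 * k) {P : α → Prop} [DecidablePred P]
      (hP : ∀ i ∈ Icc a b, P (x i)) : b + 1 - a ≤ #{z ∈ X | P z} := by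
    rw [← Nat.card_Icc]
    exact card_le_card_of_injOn x (fun i hi => mem_filter.2 ⟨hxX i, hP i hi⟩)
      (hx.injOn.mono fun i hi => (mem_Icc.1 hi).2.trans hb)
  refine ⟨x k, ?_, ?_⟩
  · exact hcard (a := 0) (b := k) (by omega) fun i hi => by
      obtain ⟨-, hik⟩ := mem_Icc.1 hi
      exact hx.monotoneOn (by simp; omega) (by simp; omega) hik
  · have hle := hcard (a := k) le_rfl (P := (x k ≤ ·)) fun i hi =>
      hx.monotoneOn (by simp; omega) (mem_Icc.1 hi).2 (mem_Icc.1 hi).1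
    omega

variable {G : Type*} [AddCommGroup G]

lemma ncard_add_add_add_sub_sub_sub_const_sub (S : Set G) (c : G) :
    (({c} - S) + ({c} - S) + ({c} - S) + ({c} - S) - ({c} - S) - ({c} - S) - ({c} - S)).ncard =
      (S + S + S + S - S - S - S).ncard := by
  have heq : ({c} - S) + ({c} - S) + ({c} - S) + ({c} - S) - ({c} - S) - ({c} - S) - ({c} - S) =
      ({c} + {c} + {c} + {c} - {c} - {c} - {c}) - (S + S + S + S - S - S - S) := by
    rw [sub_add_sub_comm, sub_add_sub_comm, sub_add_sub_comm, sub_sub_sub_comm _ (S + S + S + S),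
      sub_sub_sub_comm _ (S + S + S + S - S), sub_sub_sub_comm _ (S + S + S + S - S - S)]
  have hc : ({c} + {c} + {c} + {c} - {c} - {c} - {c} : Set G) = {c} := by simp
  rw [heq, hc, Set.singleton_sub, Set.ncard_image_of_injective _ sub_right_injective]

variable {f f' f'' : ℝ → ℝ} {c : ℝ}

lemma mul_mul_sub_sq_le_ncard_of_forall_le (hf : ∀ x ≤ 0, HasDerivAt f (f' x) x)
    (hf' : ∀ x ≤ 0, HasDerivAt f' (f'' x) x) (hmono : MonotoneOn f (Set.Iic 0))
    (hpos : ∀ x < 0, 0 < f'' x) (hlog : StrictConcaveOn ℝ (Set.Iio 0) fun x => Real.log (f'' x))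
    {A B : Finset ℝ} {r n : ℕ} (hA : 2 * r < #A) (hB : n < #B) (hAB : ∀ a ∈ A, ∀ b ∈ B, a ≤ b)
    {S : Set ℝ} (hfin : S.Finite) (hS : ∀ a ∈ A, ∀ b ∈ B, f (a - b) ∈ S) (q : ℕ) :
    r * (q * (n - q ^ 2)) ≤ (S + S + S + S - S - S - S).ncard := by
  have hsub : (A + (-B : Finset ℝ) : Set ℝ) = A - B := by rw [coe_neg, ← sub_eq_add_neg]
  refine mul_mul_sub_sq_le_ncard_of_image_add_subset (convex_Iic 0) hf hf' hmono
    (by simpa using hpos) (by simpa using hlog) hA ((card_neg B).symm ▸ hB) ?_ hfin ?_ q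
  · rw [hsub]
    exact Set.sub_subset_iff.2 fun a ha b hb => sub_nonpos.2 (hAB a ha b hb)
  · rw [hsub, Set.image_subset_iff]
    exact Set.sub_subset_iff.2 hS

theorem mul_mul_sub_sq_le_ncard_of_image_sub_subset (hf : ∀ x ≤ 0, HasDerivAt f (f' x) x)
    (hf' : ∀ x ≤ 0, HasDerivAt f' (f'' x) x) (hmono : MonotoneOn f (Set.Iic 0))
    (hpos : ∀ x < 0, 0 < f'' x) (hlog : StrictConcaveOn ℝ (Set.Iio 0) fun x => Real.log (f'' x))
    (hneg : ∀ x, f (-x) = c - f x) {X Y : Finset ℝ} {r : ℕ} (hX : 2 * (2 * r) < #X)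
    (hY : 2 * (2 * r) < #Y) {S : Set ℝ} (hfin : S.Finite) (hS : f '' (X - Y) ⊆ S) (q : ℕ) :
    r * (q * (2 * r - q ^ 2)) ≤ (S + S + S + S - S - S - S).ncard := by
  obtain ⟨t, hXle, hXge⟩ := exists_lt_card_filter_le_and_lt_card_filter_ge hX
  obtain ⟨u, hYle, hYge⟩ := exists_lt_card_filter_le_and_lt_card_filter_ge hY
  have hfS {x y : ℝ} (hx : x ∈ X) (hy : y ∈ Y) : f (x - y) ∈ S :=
    hS (Set.mem_image_of_mem f (Set.sub_mem_sub hx hy))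
  rcases le_total t u with htu | hut
  · refine mul_mul_sub_sq_le_ncard_of_forall_le hf hf' hmono hpos hlog hXle hYge
      (fun x hx y hy => ?_) hfin (fun x hx y hy => ?_) q
    · exact (mem_filter.1 hx).2.trans (htu.trans (mem_filter.1 hy).2)
    · exact hfS (mem_filter.1 hx).1 (mem_filter.1 hy).1
  · rw [← ncard_add_add_add_sub_sub_sub_const_sub S c]
    refine mul_mul_sub_sq_le_ncard_of_forall_le hf hf' hmono hpos hlog hYle hXge
      (fun y hy x hx => ?_) ((Set.finite_singleton c).sub hfin) (fun y hy x hx => ?_) q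
    · exact (mem_filter.1 hy).2.trans (hut.trans (mem_filter.1 hx).2)
    · rw [← neg_sub x y, hneg]
      exact Set.sub_mem_sub rfl (hfS (mem_filter.1 hx).1 (mem_filter.1 hy).1)

end Reflection

section Growth

open Finset

lemma exists_eight_mul_sq_lt_and_le_sq {n : ℕ} (hn : n ≠ 0) :
    ∃ q, 8 * q ^ 2 < n ∧ n ≤ (4 * (q + 1)) ^ 2 := by
  refine ⟨Nat.sqrt ((n - 1) / 8), ?_, ?_⟩
  · have := Nat.sqrt_le' ((n - 1) / 8)
    omega
  · have := Nat.lt_succ_sqrt' ((n - 1) / 8)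
    rw [Nat.succ_eq_add_one] at this
    rw [mul_pow]
    omega

lemma succ_pow_five_le {q N : ℕ} (hN : 0 < N) (h : q ^ 5 ≤ N) : (q + 1) ^ 5 ≤ 2 ^ 5 * N := by
  rcases Nat.eq_zero_or_pos q with rfl | hq
  · omega
  · calc (q + 1) ^ 5 ≤ (2 * q) ^ 5 := by gcongr; omega
      _ = 2 ^ 5 * q ^ 5 := mul_pow 2 q 5
      _ ≤ 2 ^ 5 * N := by gcongr

lemma rpow_five_halves_le_pow_five {a b : ℝ} (ha : 0 ≤ a) (hb : 0 ≤ b) (h : a ≤ b ^ 2) :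
    a ^ ((5 : ℝ) / 2) ≤ b ^ 5 :=
  calc a ^ ((5 : ℝ) / 2) ≤ (b ^ 2) ^ ((5 : ℝ) / 2) := by gcongr
    _ = b ^ 5 := by
      rw [← Real.rpow_natCast b 2, ← Real.rpow_mul hb, ← Real.rpow_natCast b 5]
      norm_num

theorem min_rpow_five_halves_le_ncard_image_sub {f f' f'' : ℝ → ℝ} {c : ℝ}
    (hf : ∀ x ≤ 0, HasDerivAt f (f' x) x) (hf' : ∀ x ≤ 0, HasDerivAt f' (f'' x) x)
    (hmono : MonotoneOn f (Set.Iic 0)) (hpos : ∀ x < 0, 0 < f'' x)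
    (hlog : StrictConcaveOn ℝ (Set.Iio 0) fun x => Real.log (f'' x))
    (hneg : ∀ x, f (-x) = c - f x) (X Y : Finset ℝ) {S : Set ℝ} (hS : S = f '' (X - Y)) :
    (min #X #Y : ℝ) ^ ((5 : ℝ) / 2) ≤ 8 ^ 5 * ((S + S + S + S - S - S - S).ncard : ℝ) := by
  have hfin : S.Finite := hS ▸ (X.finite_toSet.sub Y.finite_toSet).image f
  set T := S + S + S + S - S - S - S
  rw [← Nat.cast_min]
  rcases eq_or_ne (min #X #Y) 0 with h0 | h0
  · rw [h0, Nat.cast_zero, Real.zero_rpow (by norm_num)]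
    positivity
  obtain ⟨q, hq, hq'⟩ := exists_eight_mul_sq_lt_and_le_sq h0
  have hSne : S.Nonempty := by
    rw [hS, Set.image_nonempty, Set.sub_nonempty, coe_nonempty, coe_nonempty, ← card_pos,
      ← card_pos]
    omega
  have hTpos : 0 < T.ncard :=
    (Set.ncard_pos ((((((hfin.add hfin).add hfin).add hfin).sub hfin).sub hfin).sub hfin)).2
      ((((((hSne.add hSne).add hSne).add hSne).sub hSne).sub hSne).sub hSne)
  have hT : q ^ 5 ≤ T.ncard :=
    calc q ^ 5 ≤ 2 * q ^ 2 * (q * (3 * q ^ 2)) := by nlinarith [Nat.zero_le (q ^ 5)]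
      _ = 2 * q ^ 2 * (q * (2 * (2 * q ^ 2) - q ^ 2)) := by congr 2; omega
      _ ≤ T.ncard := mul_mul_sub_sq_le_ncard_of_image_sub_subset hf hf' hmono hpos hlog hneg
        (by omega) (by omega) hfin hS.ge q
  calc ((min #X #Y : ℕ) : ℝ) ^ ((5 : ℝ) / 2) ≤ (4 * (q + 1) : ℝ) ^ 5 :=
        rpow_five_halves_le_pow_five (by positivity) (by positivity) (mod_cast hq')
    _ = 4 ^ 5 * (q + 1) ^ 5 := mul_pow _ _ 5
    _ ≤ 4 ^ 5 * (2 ^ 5 * T.ncard) := by gcongr; exact_mod_cast succ_pow_five_le hTpos hT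
    _ = 8 ^ 5 * (T.ncard : ℝ) := by ring

end Growth

section ArctanExp

open Real

lemma hasDerivAt_arctan_exp (x : ℝ) : HasDerivAt (fun x => arctan (exp x)) (2 * cosh x)⁻¹ x := by
  refine (hasDerivAt_exp x).arctan.congr_deriv ?_
  rw [cosh_eq, exp_neg]
  have := exp_pos x
  field_simp
  ring

lemma hasDerivAt_two_mul_cosh_inv (x : ℝ) :
    HasDerivAt (fun x => (2 * cosh x)⁻¹) (-sinh x / (2 * cosh x ^ 2)) x := by
  have hc := (cosh_pos x).ne'
  refine (((hasDerivAt_cosh x).const_mul 2).fun_inv (by positivity)).congr_deriv ?_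
  field_simp

lemma strictConcaveOn_log_neg_sinh_div_cosh_sq :
    StrictConcaveOn ℝ (Set.Iio 0) fun x => log (-sinh x / (2 * cosh x ^ 2)) := by
  have hlog {x : ℝ} (hx : x ∈ Set.Iio 0) :
      2 * log (cosh x) - log (sinh x) + log 2 = -log (-sinh x / (2 * cosh x ^ 2)) := by
    have hs : sinh x ≠ 0 := (sinh_neg_iff.2 hx).ne
    -- `sinh x` is negative here: `log (sinh x)` is the real logarithm of `|sinh x|`.
    rw [log_div (neg_ne_zero.2 hs) (by positivity), log_mul two_ne_zero (by positivity),
      log_neg_eq_log, log_pow]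
    push_cast
    ring
  have hderiv x (hx : x ∈ Set.Iio 0) :
      HasDerivAt (fun x => 2 * log (cosh x) - log (sinh x) + log 2)
        (2 * (sinh x / cosh x) - cosh x / sinh x) x :=
    ((((hasDerivAt_cosh x).log (cosh_pos x).ne').const_mul 2).sub
      ((hasDerivAt_sinh x).log (sinh_neg_iff.2 hx).ne)).add_const _
  have hderiv₂ x (hx : x ∈ Set.Iio 0) :
      HasDerivAt (fun x => 2 * (sinh x / cosh x) - cosh x / sinh x)
        (2 / cosh x ^ 2 + 1 / sinh x ^ 2) x := by
    have hs : sinh x ≠ 0 := (sinh_neg_iff.2 hx).ne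
    have hc := (cosh_pos x).ne'
    refine ((((hasDerivAt_sinh x).fun_div (hasDerivAt_cosh x) hc).const_mul 2).fun_sub
      ((hasDerivAt_cosh x).fun_div (hasDerivAt_sinh x) hs)).congr_deriv ?_
    field_simp
    linear_combination (2 * sinh x ^ 2 + cosh x ^ 2) * cosh_sq_sub_sinh_sq x
  refine neg_strictConvexOn_iff.1 <| (strictConvexOn_of_hasDerivAt2_pos (convex_Iio 0) hderiv
    hderiv₂ fun x _ => ?_).congr fun x hx => hlog hx
  positivity

lemma arctan_exp_neg (x : ℝ) : arctan (exp (-x)) = π / 2 - arctan (exp x) := by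
  rw [exp_neg, arctan_inv_of_pos (exp_pos x)]

end ArctanExp

theorem growth_arctan_exp_general :
    ∃ c : ℝ, 0 < c ∧ ∀ X Y : Finset ℝ, ∀ S : Set ℝ,
      S = (fun x => Real.arctan (Real.exp x)) '' ((X : Set ℝ) - (Y : Set ℝ)) →
      c * (min X.card Y.card : ℝ) ^ ((5 : ℝ) / 2) ≤ ((S + S + S + S - S - S - S).ncard : ℝ) := by
  refine ⟨(8 ^ 5)⁻¹, by positivity, fun X Y S hS => (inv_mul_le_iff₀ (by positivity)).2 ?_⟩
  have hmono : Monotone fun x => Real.arctan (Real.exp x) :=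
    Real.arctan_strictMono.monotone.comp Real.exp_monotone
  refine min_rpow_five_halves_le_ncard_image_sub (fun x _ => hasDerivAt_arctan_exp x)
    (fun x _ => hasDerivAt_two_mul_cosh_inv x) (hmono.monotoneOn _) (fun x hx => ?_)
    strictConcaveOn_log_neg_sinh_div_cosh_sq arctan_exp_neg X Y hS
  have hs : 0 < -Real.sinh x := neg_pos.2 (Real.sinh_neg_iff.2 hx)
  positivity

/-- For `f(x) = arctan(eˣ)` and finite nonempty `X, Y ⊆ ℝ`, writing `S = f(X - Y)` and
`n = min(|X|, |Y|)`, one has `|4S - 3S| ≥ c · n^(5/2) / (log n)^(c')` for `n ≥ 2`. -/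
theorem growth_arctan_exp :
    ∃ c : ℝ, 0 < c ∧ ∃ c' : ℝ, 0 < c' ∧
      ∀ X Y : Finset ℝ, X.Nonempty → Y.Nonempty → 2 ≤ min X.card Y.card →
        ∀ S : Set ℝ,
          S = (fun x => Real.arctan (Real.exp x)) '' ((X : Set ℝ) - (Y : Set ℝ)) →
          c * (min X.card Y.card : ℝ) ^ ((5 : ℝ) / 2) /
              Real.log (min X.card Y.card : ℝ) ^ c' ≤
            ((S + S + S + S - S - S - S).ncard : ℝ) := by
  obtain ⟨c, hc, hbound⟩ := growth_arctan_exp_general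
  have hlog2 : 0 < Real.log 2 := Real.log_pos one_lt_two
  refine ⟨Real.log 2 * c, by positivity, 1, one_pos, fun X Y _ _ h2 S hS => ?_⟩
  have hlog : Real.log 2 ≤ Real.log (min X.card Y.card : ℝ) :=
    Real.log_le_log two_pos (mod_cast h2)
  rw [Real.rpow_one, div_le_iff₀ (hlog2.trans_le hlog), mul_assoc, mul_comm]
  exact mul_le_mul (hbound X Y S hS) hlog hlog2.le (Nat.cast_nonneg _)
end

section
/- Let f : ℝ → ℝ be continuous, strictly increasing and strictly convex, and let h₁ < h₂ < h₃ be real numbers. Suppose the parametric curve Γ = { (f(t + h₂) − f(t + h₁), f(t + h₃) − f(t + h₂)) : t ∈ ℝ } is the graph of a strictly convex or strictly concave function. Let A = {a₁ < a₂ < … < a_N} be a finite set of positive real numbers with N ≥ 2 satisfying the spacing condition min{ a_{i+1} − a_i : 1 ≤ i ≤ N−1 } ≥ max{ h₂ − h₁, h₃ − h₂ }. Then, writing S₁ = f(A + h₁), S₂ = f(A + h₂), S₃ = f(A + h₃), there is an absolute constant c > 0 such that |2S₁ − 2S₁ + 2S₂ − S₂| · |2S₃ − 2S₃ + 2S₂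 − S₂| ≥ c · N⁵ / (log N)³. -/
open Pointwise

/-!
Let `D x = f (x + h₂) - f (x + h₁)` and `E x = f (x + h₃) - f (x + h₂)`, let `a₀ < ⋯ < a_m` be the
lower half of `A`, and put `dⱼ = D aⱼ₊₁ - D aⱼ`, `eⱼ = E aⱼ₊₁ - E aⱼ`. By convexity `D` increases,
and by spacing the intervals `f (c + h₁) + (D a₀, D a_m]`, for `c` in the upper half of `A`, are
disjoint. Squeezed into each of them are the distinct sums `f (c + h₁) + D aⱼ + dᵢ` with `dᵢ ≤ dⱼ`,
all of which lie in `2S₁ - 2S₁ + 2S₂ - S₂`; for fixed `c` and `j` their number is the rank `rⱼ` of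
`dⱼ` among the values of `d`. In the same way `2S₃ - 2S₃ + 2S₂ - S₂` is controlled by the ranks `sⱼ`
of the `eⱼ`.

A strictly convex curve contains no parallelogram, so the vectors `(dⱼ, eⱼ)`, hence the pairs
`(rⱼ, sⱼ)`, are distinct. As few lattice points lie under the hyperbola `r s = X`, typically
`rⱼ sⱼ` is at least of order `m / log m`, and Cauchy–Schwarz bounds `(∑ rⱼ) (∑ sⱼ)` from below.
-/

section ConvexExpander

open Finset

section Rank

variable {ι α β : Type*} [Fintype ι] [LinearOrder α] [LinearOrder β]

/-- The rank of `d j` among the distinct values of the finite family `d`, counted from `1`, with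
equal members of the family getting equal ranks. -/
def denseRank (d : ι → α) (j : ι) : ℕ := #{v ∈ univ.image d | v ≤ d j}

lemma denseRank_pos (d : ι → α) (j : ι) : 0 < denseRank d j :=
  card_pos.mpr ⟨d j, mem_filter.mpr ⟨mem_image_of_mem d (mem_univ j), le_rfl⟩⟩

lemma denseRank_le_card (d : ι → α) (j : ι) : denseRank d j ≤ Fintype.card ι :=
  (card_filter_le _ _).trans card_image_le

lemma denseRank_lt_denseRank {d : ι → α} {i j : ι} (h : d i < d j) :
    denseRank d i < denseRank d j := by
  refine card_lt_card ⟨monotone_filter_right _ fun v _ hv ↦ hv.trans h.le, fun hsub ↦ ?_⟩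
  have hj := hsub (mem_filter.mpr ⟨mem_image_of_mem d (mem_univ j), le_rfl⟩)
  exact (mem_filter.mp hj).2.not_gt h

lemma eq_of_denseRank_eq {d : ι → α} {i j : ι} (h : denseRank d i = denseRank d j) : d i = d j := by
  rcases lt_trichotomy (d i) (d j) with hlt | heq | hgt
  · exact absurd h (denseRank_lt_denseRank hlt).ne
  · exact heq
  · exact absurd h (denseRank_lt_denseRank hgt).ne'

lemma injective_denseRank_prodMk {d : ι → α} {e : ι → β}
    (h : Function.Injective fun j ↦ (d j, e j)) :
    Function.Injective fun j ↦ (denseRank d j, denseRank e j) := fun _ _ hij ↦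
  h <| Prod.ext (eq_of_denseRank_eq (d := d) (congrArg Prod.fst hij))
    (eq_of_denseRank_eq (d := e) (congrArg Prod.snd hij))

end Rank

section Hyperbola

lemma card_mul_le_le_mul_one_add_log {P : Finset (ℕ × ℕ)} {n : ℕ} {X : ℝ} (hX : 0 ≤ X)
    (hP : ∀ p ∈ P, 0 < p.1 ∧ p.1 ≤ n ∧ 0 < p.2 ∧ (p.1 * p.2 : ℝ) ≤ X) :
    (#P : ℝ) ≤ X * (1 + Real.log n) := by
  have hsub : P ⊆ ((Icc 1 n).sigma fun x ↦ Icc 1 ⌊X / x⌋₊).image fun p ↦ (p.1, p.2) := by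
    rintro ⟨x, y⟩ hp
    obtain ⟨hx, hxn, hy, hxy⟩ := hP _ hp
    have hyX : y ≤ ⌊X / x⌋₊ := Nat.le_floor <| by
      rw [le_div_iff₀ (by exact_mod_cast hx), mul_comm]
      exact hxy
    exact mem_image.mpr ⟨⟨x, y⟩, mem_sigma.mpr ⟨mem_Icc.mpr ⟨hx, hxn⟩, mem_Icc.mpr ⟨hy, hyX⟩⟩, rfl⟩
  calc (#P : ℝ) ≤ ∑ x ∈ Icc 1 n, (⌊X / x⌋₊ : ℝ) := by
        have h := (card_le_card hsub).trans card_image_le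
        simp only [card_sigma, Nat.card_Icc, Nat.add_sub_cancel] at h
        exact_mod_cast h
    _ ≤ ∑ x ∈ Icc 1 n, X * (x : ℝ)⁻¹ :=
        sum_le_sum fun x _ ↦ (Nat.floor_le (by positivity)).trans_eq (div_eq_mul_inv _ _)
    _ = X * (harmonic n : ℝ) := by rw [← mul_sum, harmonic_eq_sum_Icc]; push_cast; rfl
    _ ≤ X * (1 + Real.log n) := by gcongr; exact harmonic_le_one_add_log n

variable {ι : Type*} [Fintype ι]

lemma card_pow_three_le_mul_sum_mul_sum {r s : ι → ℕ} {n : ℕ}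
    (hinj : Function.Injective fun j ↦ (r j, s j)) (hr : ∀ j, 0 < r j) (hrn : ∀ j, r j ≤ n)
    (hs : ∀ j, 0 < s j) :
    (Fintype.card ι : ℝ) ^ 3 ≤
      8 * (1 + Real.log n) * ((∑ j, (r j : ℝ)) * ∑ j, (s j : ℝ)) := by
  set m : ℝ := (Fintype.card ι : ℝ)
  set L : ℝ := 1 + Real.log n
  have hL : 0 < L := by have := Real.log_natCast_nonneg n; positivity
  set X : ℝ := m / (2 * L)
  have hX : 0 ≤ X := by positivity
  let small : Finset ι := {j | (r j * s j : ℝ) ≤ X}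
  let large : Finset ι := {j | ¬ (r j * s j : ℝ) ≤ X}
  have hsmall : (#small : ℝ) ≤ m / 2 := by
    have h := card_mul_le_le_mul_one_add_log (P := small.image fun j ↦ (r j, s j)) (n := n) hX <| by
      simp only [mem_image, forall_exists_index, and_imp]
      rintro _ j hj rfl
      exact ⟨hr j, hrn j, hs j, (mem_filter.mp hj).2⟩
    rw [card_image_of_injective _ hinj] at h
    calc (#small : ℝ) ≤ X * L := h
      _ = m / 2 := by simp only [X]; field_simp
  have hlarge : m / 2 ≤ #large := by
    have h : (#small + #large : ℝ) = m := by
      rw [← Nat.cast_add, card_filter_add_card_filter_not, card_univ]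
    linarith
  have hCS : (#large * √X) ^ 2 ≤ (∑ j, (r j : ℝ)) * ∑ j, (s j : ℝ) := by
    calc (#large * √X) ^ 2 = (∑ _j ∈ large, √X) ^ 2 := by rw [sum_const, nsmul_eq_mul]
      _ ≤ (∑ j ∈ large, (r j : ℝ)) * ∑ j ∈ large, (s j : ℝ) :=
        sum_sq_le_sum_mul_sum_of_sq_le_mul _ (by simp) (by simp) fun j hj ↦ by
          rw [Real.sq_sqrt hX]
          exact (not_le.mp (mem_filter.mp hj).2).le
      _ ≤ (∑ j, (r j : ℝ)) * ∑ j, (s j : ℝ) := by gcongr <;> exact subset_univ _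
  calc m ^ 3 = 8 * L * ((m / 2) ^ 2 * X) := by simp only [X]; field_simp; norm_num
    _ ≤ 8 * L * (#large ^ 2 * X) := by gcongr
    _ = 8 * L * (#large * √X) ^ 2 := by rw [mul_pow, Real.sq_sqrt hX]
    _ ≤ 8 * L * ((∑ j, (r j : ℝ)) * ∑ j, (s j : ℝ)) := by gcongr

end Hyperbola

section Gaps

variable {α : Type*} [AddCommGroup α] [LinearOrder α] {m : ℕ}

/-- The differences between consecutive terms of a finite sequence. -/
def gap (D : Fin (m + 1) → α) (j : Fin m) : α := D j.succ - D j.castSucc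

/-- The sums `D j + v` where `v` is a gap of `D` that does not exceed the `j`-th one. If `D`
increases, these are the points that translates of gaps squeeze into `(D j, D (j + 1)]`. -/
def squeezedSums (D : Fin (m + 1) → α) : Finset α :=
  (univ.sigma fun j ↦ {v ∈ univ.image (gap D) | v ≤ gap D j}).image fun p ↦ D p.1.castSucc + p.2

lemma mem_squeezedSums {D : Fin (m + 1) → α} {x : α} :
    x ∈ squeezedSums D ↔ ∃ j i, gap D i ≤ gap D j ∧ D j.castSucc + gap D i = x := by
  simp [squeezedSums]

lemma squeezedSums_subset_range (D : Fin (m + 1) → α) :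
    (squeezedSums D : Set α) ⊆ Set.range D + Set.range D - Set.range D := by
  intro x hx
  obtain ⟨j, i, -, rfl⟩ := mem_squeezedSums.mp hx
  rw [gap, ← add_sub_assoc]
  exact Set.sub_mem_sub (Set.add_mem_add ⟨_, rfl⟩ ⟨_, rfl⟩) ⟨_, rfl⟩

lemma pairwise_le_abs_sub_image {β : Type*} [LinearOrder β] {C : Finset β} {g : β → α} {L : α}
    (hg : ∀ x ∈ C, ∀ y ∈ C, x < y → L ≤ g y - g x) :
    (C.image g : Set α).Pairwise fun u u' ↦ L ≤ |u - u'| := by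
  rw [coe_image]
  rintro _ ⟨x, hx, rfl⟩ _ ⟨y, hy, rfl⟩ hne
  rcases lt_trichotomy x y with hxy | rfl | hyx
  · exact (hg x hx y hy hxy).trans (abs_sub_comm (g x) (g y) ▸ le_abs_self _)
  · exact absurd rfl hne
  · exact (hg y hy x hx hyx).trans (le_abs_self _)

variable [IsOrderedAddMonoid α] {D : Fin (m + 1) → α}

lemma gap_pos (hD : StrictMono D) (j : Fin m) : 0 < gap D j :=
  sub_pos.mpr (hD j.castSucc_lt_succ)

lemma add_le_apply_succ {j : Fin m} {v : α} (h : v ≤ gap D j) : D j.castSucc + v ≤ D j.succ :=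
  le_sub_iff_add_le'.mp h

lemma squeezedSums_subset_Ioc (hD : StrictMono D) :
    (squeezedSums D : Set α) ⊆ Set.Ioc (D 0) (D (Fin.last m)) := by
  intro x hx
  obtain ⟨j, i, hij, rfl⟩ := mem_squeezedSums.mp hx
  constructor
  · exact lt_add_of_le_of_pos (hD.monotone (Fin.zero_le _)) (gap_pos hD i)
  · exact (add_le_apply_succ hij).trans (hD.monotone (Fin.le_last _))

lemma card_squeezedSums (hD : StrictMono D) :
    #(squeezedSums D) = ∑ j, denseRank (gap D) j := by
  have hlt {j j' : Fin m} {v v' : α} (hv : v ≤ gap D j) (hv' : 0 < v') (hj : j < j') :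
      D j.castSucc + v < D j'.castSucc + v' :=
    calc D j.castSucc + v ≤ D j.succ := add_le_apply_succ hv
      _ ≤ D j'.castSucc := hD.monotone (Fin.succ_le_castSucc_iff.mpr hj)
      _ < D j'.castSucc + v' := lt_add_of_pos_right _ hv'
  have hmem {j : Fin m} {v : α} (h : ⟨j, v⟩ ∈ (univ.sigma fun j ↦
      {v ∈ univ.image (gap D) | v ≤ gap D j} : Finset (Σ _ : Fin m, α))) : 0 < v ∧ v ≤ gap D j := by
    obtain ⟨hv, hvj⟩ := mem_filter.mp (mem_sigma.mp h).2
    obtain ⟨i, -, rfl⟩ := mem_image.mp hv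
    exact ⟨gap_pos hD i, hvj⟩
  rw [squeezedSums, card_image_of_injOn, card_sigma]
  · rfl
  rintro ⟨j, v⟩ hp ⟨j', v'⟩ hp' heq
  obtain rfl : j = j' := by
    rcases lt_trichotomy j j' with h | h | h
    · exact absurd heq (hlt (hmem hp).2 (hmem hp').1 h).ne
    · exact h
    · exact absurd heq (hlt (hmem hp').2 (hmem hp).1 h).ne'
  obtain rfl : v = v' := add_left_cancel heq
  rfl

lemma card_add_of_separated {U W : Finset α} {L : α}
    (hU : (U : Set α).Pairwise fun u u' ↦ L ≤ |u - u'|) (hW : ∀ w ∈ W, ∀ w' ∈ W, |w - w'| < L) :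
    #(U + W) = #U * #W := by
  rw [card_add_iff]
  rintro ⟨u, w⟩ ⟨hu, hw⟩ ⟨u', w'⟩ ⟨hu', hw'⟩ (heq : u + w = u' + w')
  obtain rfl : u = u' := by
    by_contra hne
    have hdiff : u - u' = w' - w := by rw [sub_eq_sub_iff_add_eq_add, heq, add_comm]
    exact (hU hu hu' hne).not_gt (hdiff ▸ hW w' hw' w hw)
  exact Prod.ext rfl (add_left_cancel heq)

lemma card_sub_of_separated {U W : Finset α} {L : α}
    (hU : (U : Set α).Pairwise fun u u' ↦ L ≤ |u - u'|) (hW : ∀ w ∈ W, ∀ w' ∈ W, |w - w'| < L) :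
    #(U - W) = #U * #W := by
  rw [sub_eq_add_neg, card_add_of_separated hU, card_neg]
  intro w hw w' hw'
  have h := hW _ (mem_neg'.mp hw') _ (mem_neg'.mp hw)
  rwa [neg_sub_neg] at h

lemma abs_sub_lt_of_mem_squeezedSums (hD : StrictMono D) {x y : α} (hx : x ∈ squeezedSums D)
    (hy : y ∈ squeezedSums D) : |x - y| < D (Fin.last m) - D 0 := by
  obtain ⟨hx₀, hxm⟩ := squeezedSums_subset_Ioc hD hx
  obtain ⟨hy₀, hym⟩ := squeezedSums_subset_Ioc hD hy
  exact abs_sub_lt_iff.mpr ⟨(sub_le_sub_right hxm y).trans_lt (sub_lt_sub_left hy₀ _),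
    (sub_le_sub_right hym x).trans_lt (sub_lt_sub_left hx₀ _)⟩

section Sumset

variable {S P : Set α} {U : Finset α}

lemma card_mul_sum_denseRank_le_ncard_add (hD : StrictMono D)
    (hU : (U : Set α).Pairwise fun u u' ↦ D (Fin.last m) - D 0 ≤ |u - u'|)
    (hS : S.Finite) (hUS : ↑U ⊆ S) (hP : P.Finite) (hDP : Set.range D ⊆ P) :
    #U * ∑ j, denseRank (gap D) j ≤ (S + (P + P - P)).ncard := by
  have hW : (squeezedSums D : Set α) ⊆ P + P - P := by grw [squeezedSums_subset_range, hDP]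
  rw [← card_squeezedSums hD, ← card_add_of_separated hU fun w hw w' hw' ↦
    abs_sub_lt_of_mem_squeezedSums hD hw hw', ← Set.ncard_coe_finset, coe_add]
  exact Set.ncard_le_ncard (Set.add_subset_add hUS hW) (hS.add ((hP.add hP).sub hP))

lemma card_mul_sum_denseRank_le_ncard_sub (hD : StrictMono D)
    (hU : (U : Set α).Pairwise fun u u' ↦ D (Fin.last m) - D 0 ≤ |u - u'|)
    (hS : S.Finite) (hUS : ↑U ⊆ S) (hP : P.Finite) (hDP : Set.range D ⊆ P) :
    #U * ∑ j, denseRank (gap D) j ≤ (S - (P + P - P)).ncard := by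
  have hW : (squeezedSums D : Set α) ⊆ P + P - P := by grw [squeezedSums_subset_range, hDP]
  rw [← card_squeezedSums hD, ← card_sub_of_separated hU fun w hw w' hw' ↦
    abs_sub_lt_of_mem_squeezedSums hD hw hw', ← Set.ncard_coe_finset, coe_sub]
  exact Set.ncard_le_ncard (Set.sub_subset_sub hUS hW) (hS.sub ((hP.add hP).sub hP))

end Sumset

end Gaps

lemma exists_strictMono_le_of_lt_card {α : Type*} [LinearOrder α] {A : Finset α} {m : ℕ}
    (hm : m < #A) :
    ∃ a : Fin (m + 1) → α, StrictMono a ∧ (∀ i, a i ∈ A) ∧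
      ∃ C ⊆ A, #C = #A - m ∧ ∀ c ∈ C, a (Fin.last m) ≤ c := by
  let φ := A.orderEmbOfFin rfl
  refine ⟨φ ∘ Fin.castLE hm, φ.strictMono.comp (Fin.strictMono_castLE hm),
    fun i ↦ A.orderEmbOfFin_mem rfl _, (Ici ⟨m, hm⟩).map φ.toEmbedding, ?_, ?_, ?_⟩
  · intro c hc
    obtain ⟨k, -, rfl⟩ := mem_map.mp hc
    exact A.orderEmbOfFin_mem rfl k
  · rw [card_map, Fin.card_Ici]
  · intro c hc
    obtain ⟨k, hk, rfl⟩ := mem_map.mp hc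
    exact φ.monotone (mem_Ici.mp hk)

variable {𝕜 : Type*} [Field 𝕜] [LinearOrder 𝕜]

section Chords

/-- The height at abscissa `x` of the line through `p` and `r`; it takes the junk value `p.2` if
that line is vertical. -/
def chordHeight (p r : 𝕜 × 𝕜) (x : 𝕜) : 𝕜 := p.2 + (r.2 - p.2) * (x - p.1) / (r.1 - p.1)

/-- The convexity half of being the graph of a strictly convex function: points of `Γ` lie strictly
below the chords joining a point on their left to a point on their right. -/
def BelowChords (Γ : Set (𝕜 × 𝕜)) : Prop :=
  ∀ p ∈ Γ, ∀ q ∈ Γ, ∀ r ∈ Γ, p.1 < q.1 → q.1 < r.1 → q.2 < chordHeight p r q.1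

/-- The concavity half of being the graph of a strictly concave function, dual to `BelowChords`. -/
def AboveChords (Γ : Set (𝕜 × 𝕜)) : Prop :=
  ∀ p ∈ Γ, ∀ q ∈ Γ, ∀ r ∈ Γ, p.1 < q.1 → q.1 < r.1 → chordHeight p r q.1 < q.2

variable {Γ Γ' : Set (𝕜 × 𝕜)}

lemma BelowChords.mono (h : BelowChords Γ) (hsub : Γ' ⊆ Γ) : BelowChords Γ' :=
  fun p hp q hq r hr ↦ h p (hsub hp) q (hsub hq) r (hsub hr)

lemma AboveChords.mono (h : AboveChords Γ) (hsub : Γ' ⊆ Γ) : AboveChords Γ' :=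
  fun p hp q hq r hr ↦ h p (hsub hp) q (hsub hq) r (hsub hr)

variable [IsStrictOrderedRing 𝕜]

lemma chordHeight_add_chordHeight {p r : 𝕜 × 𝕜} {x y : 𝕜} (hpr : p.1 < r.1)
    (hxy : x + y = p.1 + r.1) : chordHeight p r x + chordHeight p r y = p.2 + r.2 := by
  have hne : r.1 - p.1 ≠ 0 := (sub_pos.mpr hpr).ne'
  obtain rfl : y = p.1 + r.1 - x := eq_sub_of_add_eq' hxy
  simp only [chordHeight]
  field_simp
  ring

lemma add_ne_add_of_belowChords_or_aboveChords (hΓ : BelowChords Γ ∨ AboveChords Γ)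
    {p q q' r : 𝕜 × 𝕜} (hp : p ∈ Γ) (hq : q ∈ Γ) (hq' : q' ∈ Γ) (hr : r ∈ Γ)
    (hpq : p.1 < q.1) (hqr : q.1 < r.1) (hpq' : p.1 < q'.1) (hqr' : q'.1 < r.1) :
    q + q' ≠ p + r := by
  intro heq
  have hsum := chordHeight_add_chordHeight (hpq.trans hqr) (congrArg Prod.fst heq)
  have hsnd : q.2 + q'.2 = p.2 + r.2 := congrArg Prod.snd heq
  rcases hΓ with hΓ | hΓ
  · linarith [hΓ p hp q hq r hr hpq hqr, hΓ p hp q' hq' r hr hpq' hqr']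
  · linarith [hΓ p hp q hq r hr hpq hqr, hΓ p hp q' hq' r hr hpq' hqr']

lemma injective_gap_prodMk {m : ℕ} {x y : Fin (m + 1) → 𝕜} (hx : StrictMono x)
    (hxy : BelowChords (Set.range fun i ↦ (x i, y i)) ∨
      AboveChords (Set.range fun i ↦ (x i, y i))) :
    Function.Injective fun j ↦ (gap x j, gap y j) := by
  have hne {i j : Fin m} (hij : i < j) : (gap x i, gap y i) ≠ (gap x j, gap y j) := by
    intro heq
    have h₁ : x i.succ - x i.castSucc = x j.succ - x j.castSucc := congrArg Prod.fst heq
    have h₂ : y i.succ - y i.castSucc = y j.succ - y j.castSucc := congrArg Prod.snd heq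
    refine add_ne_add_of_belowChords_or_aboveChords hxy ⟨i.castSucc, rfl⟩ ⟨i.succ, rfl⟩
      ⟨j.castSucc, rfl⟩ ⟨j.succ, rfl⟩ (hx i.castSucc_lt_succ) (hx ?_) (hx ?_)
      (hx j.castSucc_lt_succ) (Prod.ext ?_ ?_)
    · exact Fin.succ_lt_succ_iff.mpr hij
    · exact Fin.castSucc_lt_castSucc_iff.mpr hij
    · exact (sub_eq_sub_iff_add_eq_add.mp h₁).trans (add_comm _ _)
    · exact (sub_eq_sub_iff_add_eq_add.mp h₂).trans (add_comm _ _)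
  intro i j heq
  rcases lt_trichotomy i j with h | h | h
  · exact absurd heq (hne h)
  · exact h
  · exact absurd heq.symm (hne h)

end Chords

section Increments

/-- The set `f(A + h)`; the sumsets in question are built from these. -/
def shiftImage {α β : Type*} [Add α] (f : α → β) (A : Finset α) (h : α) : Set β :=
  f '' ((fun a ↦ a + h) '' (A : Set α))

lemma finite_shiftImage {α β : Type*} [Add α] (f : α → β) (A : Finset α) (h : α) :
    (shiftImage f A h).Finite :=
  (A.finite_toSet.image _).image _

lemma mem_shiftImage {α β : Type*} [Add α] (f : α → β) {A : Finset α} (h : α) {x : α}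
    (hx : x ∈ A) : f (x + h) ∈ shiftImage f A h :=
  Set.mem_image_of_mem f (Set.mem_image_of_mem _ hx)

lemma image_subset_shiftImage {α β : Type*} [Add α] [DecidableEq β] (f : α → β)
    {A C : Finset α} (h : α) (hCA : C ⊆ A) :
    ↑(C.image fun x ↦ f (x + h)) ⊆ shiftImage f A h := by
  rw [coe_image]
  rintro _ ⟨x, hx, rfl⟩
  exact mem_shiftImage f h (hCA hx)

/-- The increment of `f` from `x + p` to `x + q`, as a function of `x`. For consecutive shifts these
are the coordinates of the curve. -/
def increment {α β : Type*} [Add α] [Sub β] (f : α → β) (p q x : α) : β := f (x + q) - f (x + p)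

lemma range_increment_comp_subset_sub {ι α β : Type*} [Add α] [Sub β] {f : α → β} {p q : α}
    {A : Finset α} {a : ι → α} (haA : ∀ i, a i ∈ A) :
    Set.range (increment f p q ∘ a) ⊆ shiftImage f A q - shiftImage f A p := by
  rintro _ ⟨i, rfl⟩
  exact Set.sub_mem_sub (mem_shiftImage f q (haA i)) (mem_shiftImage f p (haA i))

section Monotone

variable {α β : Type*} [Add α] [Preorder α] [AddCommGroup β] [PartialOrder β]
  [IsOrderedAddMonoid β] {f : α → β} {s : Set α} {p q x y : α}

lemma increment_le_sub_left (hmono : MonotoneOn f s) (hx : x + q ∈ s) (hy : y + p ∈ s)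
    (hxy : x + q ≤ y + p) : increment f p q x ≤ f (y + p) - f (x + p) :=
  sub_le_sub_right (hmono hx hy hxy) _

lemma increment_le_sub_right (hmono : MonotoneOn f s) (hx : x + q ∈ s) (hy : y + p ∈ s)
    (hxy : x + q ≤ y + p) : increment f p q y ≤ f (y + q) - f (x + q) :=
  sub_le_sub_left (hmono hx hy hxy) _

end Monotone

lemma add_le_add_of_pairwise_le_abs_sub {α : Type*} [AddCommGroup α] [LinearOrder α]
    [IsOrderedAddMonoid α] {A : Finset α} {p q x y : α}
    (hgap : (A : Set α).Pairwise fun x y ↦ q - p ≤ |x - y|) (hx : x ∈ A) (hy : y ∈ A)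
    (hxy : x < y) : x + q ≤ y + p := by
  have h : q - p ≤ |y - x| := hgap hy hx hxy.ne'
  rw [abs_of_pos (sub_pos.mpr hxy), sub_le_sub_iff] at h
  rwa [add_comm]

variable [IsStrictOrderedRing 𝕜] {f : 𝕜 → 𝕜} {s : Set 𝕜} {p q : 𝕜}

lemma strictMonoOn_increment (hconv : StrictConvexOn 𝕜 s f) (hpq : p < q) :
    StrictMonoOn (increment f p q) {x | x + p ∈ s ∧ x + q ∈ s} := by
  intro x hx y hy hxy
  have hlen : 0 < (y - x) + (q - p) := by linarith
  set a := (y - x) / ((y - x) + (q - p)) with ha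
  set b := (q - p) / ((y - x) + (q - p)) with hb
  have ha₀ : 0 < a := div_pos (by linarith) hlen
  have hb₀ : 0 < b := div_pos (by linarith) hlen
  have hab : a + b = 1 := by rw [ha, hb]; field_simp
  have hne : x + p ≠ y + q := by linarith
  -- `x + q` and `y + p` are complementary convex combinations of `x + p` and `y + q`.
  have hxq : a • (x + p) + b • (y + q) = x + q := by
    simp only [ha, hb, smul_eq_mul]; field_simp; ring
  have hyp : b • (x + p) + a • (y + q) = y + p := by
    simp only [ha, hb, smul_eq_mul]; field_simp; ring
  have hfxq : f (x + q) < a * f (x + p) + b * f (y + q) :=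
    hxq ▸ hconv.2 hx.1 hy.2 hne ha₀ hb₀ hab
  have hfyp : f (y + p) < b * f (x + p) + a * f (y + q) :=
    hyp ▸ hconv.2 hx.1 hy.2 hne hb₀ ha₀ ((add_comm b a).trans hab)
  have hsum : a * f (x + p) + b * f (y + q) + (b * f (x + p) + a * f (y + q)) =
      f (x + p) + f (y + q) := by linear_combination (f (x + p) + f (y + q)) * hab
  simp only [increment]
  linarith

variable {A C : Finset 𝕜} {S T : Set 𝕜} {m : ℕ} {a : Fin (m + 1) → 𝕜}

lemma strictMono_increment_comp (hconv : StrictConvexOn 𝕜 s f) (hpq : p < q)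
    (hAs : ∀ x ∈ A, x + p ∈ s ∧ x + q ∈ s) (ha : StrictMono a) (haA : ∀ i, a i ∈ A) :
    StrictMono (increment f p q ∘ a) := fun i j hij ↦
  strictMonoOn_increment hconv hpq (hAs _ (haA i)) (hAs _ (haA j)) (ha hij)

lemma increment_last_sub_increment_zero_le (hmono : StrictMonoOn f s)
    (hconv : StrictConvexOn 𝕜 s f) (hpq : p < q) (hAs : ∀ x ∈ A, x + p ∈ s ∧ x + q ∈ s)
    (haA : ∀ i, a i ∈ A) {x : 𝕜} (hxA : x ∈ A) (hx : a (Fin.last m) ≤ x) :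
    increment f p q (a (Fin.last m)) - increment f p q (a 0) ≤ increment f p q x := by
  have hpos : 0 < increment f p q (a 0) :=
    sub_pos.mpr (hmono (hAs _ (haA 0)).1 (hAs _ (haA 0)).2 (by gcongr))
  have hle : increment f p q (a (Fin.last m)) ≤ increment f p q x :=
    (strictMonoOn_increment hconv hpq).monotoneOn (hAs _ (haA _)) (hAs _ hxA) hx
  linarith

lemma card_mul_sum_denseRank_le_ncard_left (hmono : StrictMonoOn f s)
    (hconv : StrictConvexOn 𝕜 s f) (hpq : p < q) (hAs : ∀ x ∈ A, x + p ∈ s ∧ x + q ∈ s)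
    (hgap : (A : Set 𝕜).Pairwise fun x y ↦ q - p ≤ |x - y|) (ha : StrictMono a)
    (haA : ∀ i, a i ∈ A) (hCA : C ⊆ A) (hC : ∀ c ∈ C, a (Fin.last m) ≤ c)
    (hS : S = shiftImage f A p) (hT : T = shiftImage f A q) :
    #C * ∑ j, denseRank (gap (increment f p q ∘ a)) j ≤ (S + S - S - S + T + T - T).ncard := by
  have hinj : Set.InjOn (fun x ↦ f (x + p)) C := fun x hx y hy hxy ↦
    add_right_cancel (hmono.injOn (hAs x (hCA hx)).1 (hAs y (hCA hy)).1 hxy)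
  have hsep : (C.image fun x ↦ f (x + p) : Set 𝕜).Pairwise fun u u' ↦
      (increment f p q ∘ a) (Fin.last m) - (increment f p q ∘ a) 0 ≤ |u - u'| :=
    pairwise_le_abs_sub_image fun x hx y hy hxy ↦
      (increment_last_sub_increment_zero_le hmono hconv hpq hAs haA (hCA hx) (hC x hx)).trans <|
        increment_le_sub_left hmono.monotoneOn (hAs x (hCA hx)).2 (hAs y (hCA hy)).1 <|
          add_le_add_of_pairwise_le_abs_sub hgap (hCA hx) (hCA hy) hxy
  have hregroup : S + S - S - S + T + T - T = S + (T - S + (T - S) - (T - S)) := by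
    simp only [sub_eq_add_neg, neg_add_rev, neg_neg]
    ac_rfl
  rw [hregroup, ← card_image_of_injOn hinj, hS, hT]
  exact card_mul_sum_denseRank_le_ncard_add (strictMono_increment_comp hconv hpq hAs ha haA)
    hsep (finite_shiftImage f A p) (image_subset_shiftImage f p hCA)
    ((finite_shiftImage f A q).sub (finite_shiftImage f A p)) (range_increment_comp_subset_sub haA)

lemma card_mul_sum_denseRank_le_ncard_right (hmono : StrictMonoOn f s)
    (hconv : StrictConvexOn 𝕜 s f) (hpq : p < q) (hAs : ∀ x ∈ A, x + p ∈ s ∧ x + q ∈ s)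
    (hgap : (A : Set 𝕜).Pairwise fun x y ↦ q - p ≤ |x - y|) (ha : StrictMono a)
    (haA : ∀ i, a i ∈ A) (hCA : C ⊆ A) (hC : ∀ c ∈ C, a (Fin.last m) ≤ c)
    (hS : S = shiftImage f A p) (hT : T = shiftImage f A q) :
    #C * ∑ j, denseRank (gap (increment f p q ∘ a)) j ≤ (T + T - T - T + S + S - S).ncard := by
  have hinj : Set.InjOn (fun x ↦ f (x + q)) C := fun x hx y hy hxy ↦
    add_right_cancel (hmono.injOn (hAs x (hCA hx)).2 (hAs y (hCA hy)).2 hxy)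
  have hsep : (C.image fun x ↦ f (x + q) : Set 𝕜).Pairwise fun u u' ↦
      (increment f p q ∘ a) (Fin.last m) - (increment f p q ∘ a) 0 ≤ |u - u'| :=
    pairwise_le_abs_sub_image fun x hx y hy hxy ↦
      (increment_last_sub_increment_zero_le hmono hconv hpq hAs haA (hCA hy) (hC y hy)).trans <|
        increment_le_sub_right hmono.monotoneOn (hAs x (hCA hx)).2 (hAs y (hCA hy)).1 <|
          add_le_add_of_pairwise_le_abs_sub hgap (hCA hx) (hCA hy) hxy
  have hregroup : T + T - T - T + S + S - S = T - (T - S + (T - S) - (T - S)) := by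
    simp only [sub_eq_add_neg, neg_add_rev, neg_neg]
    ac_rfl
  rw [hregroup, ← card_image_of_injOn hinj, hS, hT]
  exact card_mul_sum_denseRank_le_ncard_sub (strictMono_increment_comp hconv hpq hAs ha haA)
    hsep (finite_shiftImage f A q) (image_subset_shiftImage f q hCA)
    ((finite_shiftImage f A q).sub (finite_shiftImage f A p)) (range_increment_comp_subset_sub haA)

end Increments

lemma half_le_log_natCast {N : ℕ} (hN : 2 ≤ N) : 1 / 2 ≤ Real.log N := by
  have h : Real.log 2 ≤ Real.log N := Real.log_le_log two_pos (by exact_mod_cast hN)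
  linarith [Real.log_two_gt_d9]

lemma pow_five_div_log_le_mul {N : ℕ} (hN : 2 ≤ N) {R R' t t' : ℝ} (hR : 0 ≤ R) (hR' : 0 ≤ R')
    (h : ((N / 2 : ℕ) : ℝ) ^ 3 ≤ 8 * (1 + Real.log (N / 2 : ℕ)) * (R * R'))
    (ht : ((N - N / 2 : ℕ) : ℝ) * R ≤ t) (ht' : ((N - N / 2 : ℕ) : ℝ) * R' ≤ t') :
    (N : ℝ) ^ 5 / (2592 * Real.log N) ≤ t * t' := by
  have hlog := half_le_log_natCast hN
  have hloghalf : Real.log (N / 2 : ℕ) ≤ Real.log N :=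
    Real.log_le_log (by exact_mod_cast show 0 < N / 2 by omega)
      (by exact_mod_cast Nat.div_le_self N 2)
  have hm : (N : ℝ) / 3 ≤ (N / 2 : ℕ) := by
    rw [div_le_iff₀ three_pos]
    exact_mod_cast show N ≤ N / 2 * 3 by omega
  have hk : (N : ℝ) / 2 ≤ (N - N / 2 : ℕ) := by
    rw [div_le_iff₀ two_pos]
    exact_mod_cast show N ≤ (N - N / 2) * 2 by omega
  set m : ℝ := ((N / 2 : ℕ) : ℝ)
  set k : ℝ := ((N - N / 2 : ℕ) : ℝ)
  have ht₀ : 0 ≤ t := ht.trans' (by positivity)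
  rw [div_le_iff₀ (by positivity)]
  calc (N : ℝ) ^ 5 = 108 * ((N / 2) ^ 2 * (N / 3) ^ 3) := by ring
    _ ≤ 108 * (k ^ 2 * m ^ 3) := by gcongr
    _ ≤ 108 * (k ^ 2 * (8 * (1 + Real.log m) * (R * R'))) := by gcongr
    _ ≤ 108 * (k ^ 2 * (8 * (3 * Real.log N) * (R * R'))) := by gcongr; linarith
    _ = (k * R) * (k * R') * (2592 * Real.log N) := by ring
    _ ≤ t * t' * (2592 * Real.log N) := by gcongr

lemma div_log_pow_three_le_div_log {N : ℕ} (hN : 2 ≤ N) :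
    1 / 10368 * (N : ℝ) ^ 5 / Real.log N ^ 3 ≤ (N : ℝ) ^ 5 / (2592 * Real.log N) := by
  have hlog := half_le_log_natCast hN
  have hsq : 1 / 4 ≤ Real.log N ^ 2 := by nlinarith
  rw [div_le_div_iff₀ (by positivity) (by positivity)]
  calc 1 / 10368 * (N : ℝ) ^ 5 * (2592 * Real.log N)
      = N ^ 5 * (1 / 4 * Real.log N) := by ring
    _ ≤ N ^ 5 * (Real.log N ^ 2 * Real.log N) := by gcongr
    _ = N ^ 5 * Real.log N ^ 3 := by ring

theorem convex_expander_squeeze_general [IsStrictOrderedRing 𝕜] {f : 𝕜 → 𝕜} {s : Set 𝕜}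
    {h₁ h₂ h₃ : 𝕜} {A : Finset 𝕜}
    (hmono : StrictMonoOn f s) (hconv : StrictConvexOn 𝕜 s f) (h₁₂ : h₁ < h₂) (h₂₃ : h₂ < h₃)
    (hs₁ : ∀ a ∈ A, a + h₁ ∈ s) (hs₃ : ∀ a ∈ A, a + h₃ ∈ s)
    (hΓ : BelowChords ((fun a ↦ (increment f h₁ h₂ a, increment f h₂ h₃ a)) '' A) ∨
      AboveChords ((fun a ↦ (increment f h₁ h₂ a, increment f h₂ h₃ a)) '' A))
    (hA : 2 ≤ #A) (hgap : ∀ a ∈ A, ∀ b ∈ A, a ≠ b → max (h₂ - h₁) (h₃ - h₂) ≤ |a - b|)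
    {S₁ S₂ S₃ : Set 𝕜} (hS₁ : S₁ = shiftImage f A h₁) (hS₂ : S₂ = shiftImage f A h₂)
    (hS₃ : S₃ = shiftImage f A h₃) :
    (#A : ℝ) ^ 5 / (2592 * Real.log #A) ≤
      ((S₁ + S₁ - S₁ - S₁ + S₂ + S₂ - S₂).ncard : ℝ) *
        ((S₃ + S₃ - S₃ - S₃ + S₂ + S₂ - S₂).ncard : ℝ) := by
  obtain ⟨a, ha, haA, C, hCA, hcard, hC⟩ :=
    exists_strictMono_le_of_lt_card (A := A) (m := #A / 2) (by omega)
  have hs₂ (x) (hx : x ∈ A) : x + h₂ ∈ s :=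
    hconv.1.ordConnected.out (hs₁ x hx) (hs₃ x hx) ⟨by gcongr, by gcongr⟩
  have hs₁₂ (x) (hx : x ∈ A) : x + h₁ ∈ s ∧ x + h₂ ∈ s := ⟨hs₁ x hx, hs₂ x hx⟩
  have hs₂₃ (x) (hx : x ∈ A) : x + h₂ ∈ s ∧ x + h₃ ∈ s := ⟨hs₂ x hx, hs₃ x hx⟩
  have hD := strictMono_increment_comp hconv h₁₂ hs₁₂ ha haA
  have hsub : (Set.range fun i ↦ ((increment f h₁ h₂ ∘ a) i, (increment f h₂ h₃ ∘ a) i)) ⊆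
      (fun x ↦ (increment f h₁ h₂ x, increment f h₂ h₃ x)) '' A := by
    rintro _ ⟨i, rfl⟩
    exact ⟨a i, haA i, rfl⟩
  have hinj := injective_denseRank_prodMk <|
    injective_gap_prodMk hD (hΓ.imp (·.mono hsub) (·.mono hsub))
  have hranks := card_pow_three_le_mul_sum_mul_sum hinj (denseRank_pos _) (denseRank_le_card _)
    (denseRank_pos _)
  have hleft := card_mul_sum_denseRank_le_ncard_left hmono hconv h₁₂ hs₁₂
    (fun x hx y hy hxy ↦ (le_max_left _ _).trans (hgap x hx y hy hxy)) ha haA hCA hC hS₁ hS₂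
  have hright := card_mul_sum_denseRank_le_ncard_right hmono hconv h₂₃ hs₂₃
    (fun x hx y hy hxy ↦ (le_max_right _ _).trans (hgap x hx y hy hxy)) ha haA hCA hC hS₂ hS₃
  rw [Fintype.card_fin] at hranks
  rw [hcard] at hleft hright
  exact pow_five_div_log_le_mul hA (by positivity) (by positivity) hranks
    (by exact_mod_cast hleft) (by exact_mod_cast hright)

end ConvexExpander

/-- Squeezing expander bound: if `f` is continuous, strictly increasing and strictly convex,
`h₁ < h₂ < h₃`, the parametric curve `t ↦ (f(t+h₂) - f(t+h₁), f(t+h₃) - f(t+h₂))` is the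
graph of a strictly convex or strictly concave function, and `A` is a finite set of `N ≥ 2`
positive reals whose consecutive gaps are all at least `max(h₂ - h₁, h₃ - h₂)`, then with
`Sᵢ = f(A + hᵢ)` we have `|2S₁ - 2S₁ + 2S₂ - S₂| · |2S₃ - 2S₃ + 2S₂ - S₂| ≥ c·N⁵/(log N)³`. -/
theorem convex_expander_squeeze :
    ∃ c : ℝ, 0 < c ∧
      ∀ (f : ℝ → ℝ) (h₁ h₂ h₃ : ℝ) (A : Finset ℝ),
        Continuous f → StrictMono f → StrictConvexOn ℝ Set.univ f →
        h₁ < h₂ → h₂ < h₃ →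
        -- the curve Γ is the graph of a strictly convex or strictly concave function
        (∀ Γ : Set (ℝ × ℝ),
          Γ = {p : ℝ × ℝ | ∃ t : ℝ, p = (f (t + h₂) - f (t + h₁), f (t + h₃) - f (t + h₂))} →
          (∀ p ∈ Γ, ∀ q ∈ Γ, p.1 = q.1 → p = q) ∧
          ((∀ p ∈ Γ, ∀ q ∈ Γ, ∀ r ∈ Γ, p.1 < q.1 → q.1 < r.1 →
              q.2 < p.2 + (r.2 - p.2) * (q.1 - p.1) / (r.1 - p.1)) ∨
           (∀ p ∈ Γ, ∀ q ∈ Γ, ∀ r ∈ Γ, p.1 < q.1 → q.1 < r.1 →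
              p.2 + (r.2 - p.2) * (q.1 - p.1) / (r.1 - p.1) < q.2))) →
        (∀ a ∈ A, (0 : ℝ) < a) → 2 ≤ A.card →
        -- spacing condition: all gaps between distinct elements are at least
        -- max (h₂ - h₁) (h₃ - h₂)
        (∀ a ∈ A, ∀ b ∈ A, a ≠ b → max (h₂ - h₁) (h₃ - h₂) ≤ |a - b|) →
        ∀ S₁ S₂ S₃ : Set ℝ,
          S₁ = f '' ((fun a => a + h₁) '' (A : Set ℝ)) →
          S₂ = f '' ((fun a => a + h₂) '' (A : Set ℝ)) →
          S₃ = f '' ((fun a => a + h₃) '' (A : Set ℝ)) →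
          c * (A.card : ℝ) ^ 5 / Real.log (A.card : ℝ) ^ 3 ≤
            ((S₁ + S₁ - S₁ - S₁ + S₂ + S₂ - S₂).ncard : ℝ) *
              ((S₃ + S₃ - S₃ - S₃ + S₂ + S₂ - S₂).ncard : ℝ) := by
  refine ⟨1 / 10368, by norm_num, fun f h₁ h₂ h₃ A _ hmono hconv h₁₂ h₂₃ hΓ _ hA hgap
    S₁ S₂ S₃ hS₁ hS₂ hS₃ ↦ (div_log_pow_three_le_div_log hA).trans ?_⟩
  have hsub : (fun a ↦ (increment f h₁ h₂ a, increment f h₂ h₃ a)) '' A ⊆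
      {p : ℝ × ℝ | ∃ t : ℝ, p = (f (t + h₂) - f (t + h₁), f (t + h₃) - f (t + h₂))} :=
    fun _ ⟨a, _, ha⟩ ↦ ⟨a, ha.symm⟩
  have hchords := (hΓ _ rfl).2.imp (BelowChords.mono · hsub) (AboveChords.mono · hsub)
  exact convex_expander_squeeze_general (s := Set.univ) (hmono.strictMonoOn _) hconv h₁₂ h₂₃
    (by simp) (by simp) hchords hA hgap hS₁ hS₂ hS₃
end

section
/- There exists an absolute constant c > 0 such that for every finite set P ⊂ ℝ² that is not contained in a single line, the set of distinct angles 𝒜(P) = { ∠(p, q, r) : p, q, r ∈ P, p ≠ q, r ≠ q } has cardinality at least c·|P|. -/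
/-!
Székely's crossing-number method gives the Szemerédi–Trotter bound on the number of lines that
contain at least `k` of `n` given points. It follows that the lines rich in points account for only
a small proportion of the pairs of points, unless some point lies on a positive proportion of `n`
lines spanned by the set; so if the set is not collinear, there is such a point `q` in any case (the
weak Dirac theorem). For a fixed `p ≠ q`, at most three lines `qr` yield a given pair of an angle
`∠ p q r` and an orientation of it, hence `q` is the vertex of a positive proportion of `n` angles.

The crossing lemma rests on the linear bound for the edges of a plane graph. For straight edges it
can be proved without Euler's formula, by charging each edge to a vertex.
-/

namespace PlanarIncidence

open Finset

section Counting

theorem sum_Icc_pow_mul_pow {α R : Type*} [DecidableEq α] [CommRing R] {V P : Finset α}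
    (hV : V ⊆ P) (p : R) : ∑ T ∈ Icc V P, p ^ #T * (1 - p) ^ (#P - #T) = p ^ #V := by
  have hdisj {U : Finset α} (hU : U ∈ (P \ V).powerset) : Disjoint V U :=
    disjoint_sdiff.mono_right (mem_powerset.1 hU)
  have hinj : Set.InjOn (V ∪ ·) ((P \ V).powerset : Set (Finset α)) := fun U hU W hW h => by
    rw [← union_sdiff_cancel_left (hdisj hU), ← union_sdiff_cancel_left (hdisj hW)]
    exact congrArg (· \ V) h
  calc ∑ T ∈ Icc V P, p ^ #T * (1 - p) ^ (#P - #T)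
      = ∑ U ∈ (P \ V).powerset, p ^ #V * (p ^ #U * (1 - p) ^ (#(P \ V) - #U)) := by
        rw [Icc_eq_image_powerset hV, sum_image hinj]
        refine sum_congr rfl fun U hU => ?_
        rw [card_union_of_disjoint (hdisj hU), card_sdiff_of_subset hV, pow_add, mul_assoc,
          Nat.sub_sub]
    _ = p ^ #V := by
        rw [← mul_sum, sum_pow_mul_eq_add_pow, add_sub_cancel, one_pow, mul_one]

/-- If `T` is a random subset of `P` that contains each point independently with probability `p`,
then the expected number of indices `i` with `V i ⊆ T` is `∑ p ^ #(V i)`. -/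
theorem sum_powerset_mul_card_filter_subset {ι α R : Type*} [DecidableEq α] [CommRing R]
    {I : Finset ι} {V : ι → Finset α} {P : Finset α} (hV : ∀ i ∈ I, V i ⊆ P) (p : R) :
    ∑ T ∈ P.powerset, p ^ #T * (1 - p) ^ (#P - #T) * #{i ∈ I | V i ⊆ T} =
      ∑ i ∈ I, p ^ #(V i) := by
  simp only [card_filter, Nat.cast_sum, mul_sum, Nat.cast_ite, Nat.cast_one, Nat.cast_zero,
    mul_ite, mul_one, mul_zero]
  rw [sum_comm]
  refine sum_congr rfl fun i hi => ?_
  rw [← sum_filter, ← sum_Icc_pow_mul_pow (hV i hi) p]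
  refine sum_congr ?_ fun _ _ => rfl
  ext T
  simp only [mem_filter, mem_powerset, mem_Icc, and_comm]

theorem sq_le_sq_add_sum_Ioc (k m : ℕ) : m ^ 2 ≤ k ^ 2 + ∑ i ∈ Ioc k m, 2 * i := by
  induction m with
  | zero => simp only [zero_pow two_ne_zero, Nat.zero_le]
  | succ m ih =>
    rcases le_or_gt (m + 1) k with h | h
    · exact (Nat.pow_le_pow_left h 2).trans (Nat.le_add_right _ _)
    · rw [sum_Ioc_succ_top (Nat.le_of_lt_succ h)]
      linarith

theorem sum_sq_le_mul_sq_add_sum_Ioc {ι : Type*} {s : Finset ι} {f : ι → ℕ} {M : ℕ}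
    (hM : ∀ i ∈ s, f i ≤ M) (k : ℕ) :
    ∑ i ∈ s, f i ^ 2 ≤ #s * k ^ 2 + ∑ j ∈ Ioc k M, #{i ∈ s | j ≤ f i} * (2 * j) :=
  calc ∑ i ∈ s, f i ^ 2 ≤ ∑ i ∈ s, (k ^ 2 + ∑ j ∈ Ioc k (f i), 2 * j) :=
        sum_le_sum fun i _ => sq_le_sq_add_sum_Ioc k (f i)
    _ = #s * k ^ 2 + ∑ j ∈ Ioc k M, ∑ i ∈ s with j ≤ f i, 2 * j := by
        rw [sum_add_distrib, sum_const, smul_eq_mul, sum_comm' fun i j => ?_]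
        simp only [mem_Ioc, mem_filter]
        exact ⟨fun h => ⟨⟨h.1, h.2.2⟩, h.2.1, h.2.2.trans (hM i h.1)⟩,
          fun h => ⟨h.1.1, h.2.1, h.1.2⟩⟩
    _ = #s * k ^ 2 + ∑ j ∈ Ioc k M, #{i ∈ s | j ≤ f i} * (2 * j) := by
        simp only [sum_const, smul_eq_mul]

end Counting

/-- A non-vertical line in the coordinate plane, the graph of `x ↦ slope * x + intercept`. -/
@[ext]
structure NonverticalLine where
  slope : ℝ
  intercept : ℝ

namespace NonverticalLine

variable {l m : NonverticalLine} {a b x : ℝ}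

/-- The height of a line above the abscissa `x`; it is the coercion of lines to functions. -/
def height (l : NonverticalLine) (x : ℝ) : ℝ := l.slope * x + l.intercept

instance : CoeFun NonverticalLine fun _ => ℝ → ℝ := ⟨height⟩

theorem continuous (l : NonverticalLine) : Continuous l := by
  unfold height
  fun_prop

theorem apply_sub_apply_of_apply_eq (h : l a = m a) (x : ℝ) :
    m x - l x = (m.slope - l.slope) * (x - a) := by
  unfold height at *
  linear_combination -h

theorem lt_iff_slope_lt_of_apply_eq (h : l a = m a) (hx : a < x) :
    l x < m x ↔ l.slope < m.slope := by
  rw [← sub_pos, apply_sub_apply_of_apply_eq h, mul_pos_iff_of_pos_right (sub_pos.2 hx), sub_pos]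

theorem lt_iff_slope_gt_of_apply_eq (h : l a = m a) (hx : x < a) :
    l x < m x ↔ m.slope < l.slope := by
  rw [← sub_pos, apply_sub_apply_of_apply_eq h, ← neg_mul_neg,
    mul_pos_iff_of_pos_right (by linarith), neg_sub, sub_pos]

theorem eq_of_slope_eq (hs : l.slope = m.slope) (h : l a = m a) : l = m := by
  refine NonverticalLine.ext hs ?_
  simpa only [height, hs, add_right_inj] using h

theorem eq_of_apply_eq (hab : a ≠ b) (ha : l a = m a) (hb : l b = m b) : l = m := by
  have h := apply_sub_apply_of_apply_eq ha b
  rw [hb, sub_self, eq_comm, mul_eq_zero, or_iff_left (sub_ne_zero.2 hab.symm), sub_eq_zero] at h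
  exact eq_of_slope_eq h.symm ha

theorem exists_mem_Ioo_apply_eq (hab : a ≤ b) (ha : l a < m a) (hb : m b < l b) :
    ∃ x ∈ Set.Ioo a b, l x = m x := by
  obtain ⟨x, hx, h⟩ := intermediate_value_Ioo hab (l.continuous.sub m.continuous).continuousOn
    (show (0 : ℝ) ∈ Set.Ioo (l a - m a) (l b - m b) from ⟨sub_neg.2 ha, sub_pos.2 hb⟩)
  exact ⟨x, hx, sub_eq_zero.1 h⟩

/-- The line through two points with distinct abscissae. (If the abscissae agree, division by
zero makes it the horizontal line through the first point.) -/
noncomputable def through (p q : ℝ × ℝ) : NonverticalLine where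
  slope := (q.2 - p.2) / (q.1 - p.1)
  intercept := p.2 - (q.2 - p.2) / (q.1 - p.1) * p.1

theorem through_apply_left (p q : ℝ × ℝ) : through p q p.1 = p.2 :=
  add_sub_cancel _ _

theorem through_apply_right {p q : ℝ × ℝ} (h : p.1 ≠ q.1) : through p q q.1 = q.2 := by
  have : q.1 - p.1 ≠ 0 := sub_ne_zero.2 h.symm
  simp only [through, height]
  field_simp
  ring

theorem eq_through {p q : ℝ × ℝ} (h : p.1 ≠ q.1) (hp : l p.1 = p.2) (hq : l q.1 = q.2) :
    l = through p q :=
  eq_of_apply_eq h (hp.trans (through_apply_left p q).symm)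
    (hq.trans (through_apply_right h).symm)

end NonverticalLine

/-- A non-degenerate, non-vertical segment in the coordinate plane, given by its endpoints. -/
@[ext]
structure Segment where
  left : ℝ × ℝ
  right : ℝ × ℝ
  fst_lt : left.1 < right.1

namespace Segment

variable {e f : Segment} {a b x : ℝ}

/-- The line spanned by a segment. -/
noncomputable def line (e : Segment) : NonverticalLine := .through e.left e.right

/-- The projection of the relative interior of a segment to the first coordinate axis. -/
def shadow (e : Segment) : Set ℝ := Set.Ioo e.left.1 e.right.1

/-- Two segments cross if their relative interiors meet. In particular, overlapping collinear
segments cross. -/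
def Crosses (e f : Segment) : Prop := ∃ x ∈ e.shadow, x ∈ f.shadow ∧ e.line x = f.line x

theorem line_left (e : Segment) : e.line e.left.1 = e.left.2 :=
  NonverticalLine.through_apply_left _ _

theorem line_right (e : Segment) : e.line e.right.1 = e.right.2 :=
  NonverticalLine.through_apply_right e.fst_lt.ne

theorem crosses_of_line_eq_of_lt (h : e.line = f.line) (hef : e.left.1 < f.right.1)
    (hfe : f.left.1 < e.right.1) : e.Crosses f := by
  obtain ⟨x, hl, hr⟩ := exists_between
    (max_lt (lt_min e.fst_lt hef) (lt_min hfe f.fst_lt))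
  rw [max_lt_iff] at hl
  rw [lt_min_iff] at hr
  exact ⟨x, ⟨hl.1, hr.1⟩, ⟨hl.2, hr.2⟩, by rw [h]⟩

theorem line_le_line_of_not_crosses (h : ¬ e.Crosses f) (hab : a ≤ b)
    (hea : e.left.1 ≤ a) (hfa : f.left.1 ≤ a) (heb : b ≤ e.right.1) (hfb : b ≤ f.right.1)
    (hb : e.line b < f.line b) : e.line a ≤ f.line a := by
  by_contra! ha
  obtain ⟨x, hx, heq⟩ := NonverticalLine.exists_mem_Ioo_apply_eq hab ha hb
  exact h ⟨x, ⟨hea.trans_lt hx.1, hx.2.trans_le heb⟩, ⟨hfa.trans_lt hx.1, hx.2.trans_le hfb⟩,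
    heq.symm⟩

end Segment

/-- The segment `e` can be an edge of a straight-line graph with vertex set `S`: its endpoints lie
in `S` and it contains no other point of `S`. -/
structure IsEdge (S : Finset (ℝ × ℝ)) (e : Segment) : Prop where
  left_mem : e.left ∈ S
  right_mem : e.right ∈ S
  line_ne : ∀ w ∈ S, w.1 ∈ e.shadow → e.line w.1 ≠ w.2

/-- The segments in `E` are the edges of a plane straight-line graph with vertex set `S`. -/
structure IsPlaneGraph (S : Finset (ℝ × ℝ)) (E : Finset Segment) : Prop where
  isEdge : ∀ e ∈ E, IsEdge S e
  not_crosses : (E : Set Segment).Pairwise fun e f => ¬ e.Crosses f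

/-- Among the edges in `E` that pass strictly below the point `w`, the edge `e` is a highest one
at the abscissa of `w`. -/
structure IsDirectlyBelow (E : Finset Segment) (e : Segment) (w : ℝ × ℝ) : Prop where
  mem_shadow : w.1 ∈ e.shadow
  line_lt : e.line w.1 < w.2
  line_le : ∀ h ∈ E, w.1 ∈ h.shadow → h.line w.1 < w.2 → h.line w.1 ≤ e.line w.1

/-- The points weakly below `f` and strictly above `e`, for segments `e` and `f` with a common
left endpoint. -/
def wedge (e f : Segment) : Set (ℝ × ℝ) :=
  {w | w.1 ∈ e.shadow ∧ w.1 ≤ f.right.1 ∧ e.line w.1 < w.2 ∧ w.2 ≤ f.line w.1}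

namespace IsPlaneGraph

variable {S : Finset (ℝ × ℝ)} {E : Finset Segment} {e f g : Segment} {w : ℝ × ℝ}

/-- If `f` reaches as far as `e`, then `g` lies between them near the right endpoint of `e`; as it
cannot cross `f`, it starts inside the wedge. -/
theorem exists_mem_wedge (hG : IsPlaneGraph S E) (hf : f ∈ E) (hg : g ∈ E)
    (hef : f.left = e.left) (hslope : e.line.slope < f.line.slope)
    (heg : g.right = e.right) (hslope' : g.line.slope < e.line.slope) : ∃ w ∈ S, w ∈ wedge e f := by
  have hleft : e.line e.left.1 = f.line e.left.1 := by
    rw [e.line_left, ← hef, f.line_left]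
  have hright : e.line e.right.1 = g.line e.right.1 := by
    rw [e.line_right, ← heg, g.line_right]
  have hef_lt {x : ℝ} (hx : e.left.1 < x) : e.line x < f.line x :=
    (NonverticalLine.lt_iff_slope_lt_of_apply_eq hleft hx).2 hslope
  have heg_lt {x : ℝ} (hx : x < e.right.1) : e.line x < g.line x :=
    (NonverticalLine.lt_iff_slope_gt_of_apply_eq hright hx).2 hslope'
  rcases lt_or_ge f.right.1 e.right.1 with hfr | hfr
  · have hlt : e.left.1 < f.right.1 := hef ▸ f.fst_lt
    refine ⟨f.right, (hG.isEdge f hf).right_mem, ⟨hlt, hfr⟩, le_rfl, ?_, f.line_right.ge⟩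
    rw [← f.line_right]
    exact hef_lt hlt
  have hge_le {a : ℝ} (ha : a ≤ e.right.1) (hga : g.left.1 ≤ a) (hea : e.left.1 ≤ a) :
      g.line a ≤ f.line a := by
    refine Segment.line_le_line_of_not_crosses (b := e.right.1)
      (hG.not_crosses hg hf ?_) ha hga (hef ▸ hea)
      (congrArg Prod.fst heg).ge hfr (hright ▸ hef_lt e.fst_lt)
    rintro rfl
    exact (hslope.trans hslope').false
  have hgr : g.left.1 < e.right.1 := heg ▸ g.fst_lt
  rcases lt_or_ge e.left.1 g.left.1 with hgl | hgl
  · refine ⟨g.left, (hG.isEdge g hg).left_mem, ⟨hgl, hgr⟩, hgr.le.trans hfr, ?_, ?_⟩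
    · rw [← g.line_left]
      exact heg_lt hgr
    · rw [← g.line_left]
      exact hge_le hgr.le le_rfl hgl.le
  · have := heg_lt e.fst_lt
    have := hge_le e.fst_lt.le hgl le_rfl
    linarith

/-- Sweeping left from `w`, an edge strictly between `e` and `w` would stay between `e` and `f`,
and could only end at a vertex of the wedge further left or at the apex. -/
theorem isDirectlyBelow_of_leftmost (hG : IsPlaneGraph S E) (he : e ∈ E) (hf : f ∈ E)
    (hef : f.left = e.left)
    (hmin : ∀ h ∈ E, h.left = e.left → e.line.slope < h.line.slope → f.line.slope ≤ h.line.slope)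
    (hw : w ∈ wedge e f) (hleftmost : ∀ v ∈ S, v ∈ wedge e f → w.1 ≤ v.1) :
    IsDirectlyBelow E e w := by
  obtain ⟨hwe, hwf, hew, hwf'⟩ := hw
  refine ⟨hwe, hew, fun h hh hwh hhw => ?_⟩
  by_contra! heh
  have hhf : h.line w.1 < f.line w.1 := hhw.trans_le hwf'
  have hhe_le {a : ℝ} (ha : a ≤ w.1) (hea : e.left.1 ≤ a) (hha : h.left.1 ≤ a) :
      e.line a ≤ h.line a :=
    Segment.line_le_line_of_not_crosses (hG.not_crosses he hh (by rintro rfl; exact heh.false))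
      ha hea hha hwe.2.le hwh.2.le heh
  have hhf_le {a : ℝ} (ha : a ≤ w.1) (hea : e.left.1 ≤ a) (hha : h.left.1 ≤ a) :
      h.line a ≤ f.line a :=
    Segment.line_le_line_of_not_crosses (hG.not_crosses hh hf (by rintro rfl; exact hhf.false))
      ha hha (hef ▸ hea) hwh.2.le hwf hhf
  have happex (hle : h.left.1 ≤ e.left.1) : h.line e.left.1 = e.left.2 := by
    refine le_antisymm ?_ ?_
    · simpa only [← hef, f.line_left] using hhf_le hwe.1.le le_rfl hle
    · simpa only [e.line_left] using hhe_le hwe.1.le le_rfl hle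
  rcases lt_trichotomy h.left.1 e.left.1 with hlt | heq | hgt
  · exact (hG.isEdge h hh).line_ne e.left (hG.isEdge e he).left_mem ⟨hlt, hwe.1.trans hwh.2⟩
      (happex hlt.le)
  · have hleft : h.left = e.left := Prod.ext heq (by rw [← happex heq.le, ← heq, h.line_left])
    have hslope : e.line.slope < h.line.slope :=
      (NonverticalLine.lt_iff_slope_lt_of_apply_eq (by rw [e.line_left, happex heq.le]) hwe.1).1 heh
    have hslope' : h.line.slope < f.line.slope :=
      (NonverticalLine.lt_iff_slope_lt_of_apply_eq
        (by rw [happex heq.le, ← hef, f.line_left]) hwe.1).1 hhf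
    exact (hmin h hh hleft hslope).not_gt hslope'
  · have hmem := (hG.isEdge h hh).left_mem
    have hshadow : h.left.1 ∈ e.shadow := ⟨hgt, hwh.1.trans hwe.2⟩
    refine (hleftmost h.left hmem ⟨hshadow, hwh.1.le.trans hwf, ?_, ?_⟩).not_gt hwh.1
    · refine lt_of_le_of_ne ?_ ((hG.isEdge e he).line_ne _ hmem hshadow)
      simpa only [h.line_left] using hhe_le hwh.1.le hgt.le le_rfl
    · simpa only [h.line_left] using hhf_le hwh.1.le hgt.le le_rfl

theorem exists_isDirectlyBelow (hG : IsPlaneGraph S E) (he : e ∈ E)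
    (hf : ∃ f ∈ E, f.left = e.left ∧ e.line.slope < f.line.slope)
    (hg : ∃ g ∈ E, g.right = e.right ∧ g.line.slope < e.line.slope) :
    ∃ w ∈ S, IsDirectlyBelow E e w := by
  classical
  obtain ⟨g, hg, heg, hslope'⟩ := hg
  obtain ⟨f, hf, hmin⟩ := exists_min_image
    (E.filter fun f => f.left = e.left ∧ e.line.slope < f.line.slope) (fun f => f.line.slope)
    (by simpa only [Finset.Nonempty, mem_filter] using hf)
  obtain ⟨hf, hef, hslope⟩ := mem_filter.1 hf
  obtain ⟨v, hvS, hv⟩ := hG.exists_mem_wedge hf hg hef hslope heg hslope'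
  obtain ⟨w, hw, hleftmost⟩ := exists_min_image (S.filter (· ∈ wedge e f)) Prod.fst
    ⟨v, mem_filter.2 ⟨hvS, hv⟩⟩
  obtain ⟨hwS, hw⟩ := mem_filter.1 hw
  exact ⟨w, hwS, hG.isDirectlyBelow_of_leftmost he hf hef
    (fun h hh hl hs => hmin h (mem_filter.2 ⟨hh, hl, hs⟩)) hw
    fun u hu huw => hleftmost u (mem_filter.2 ⟨hu, huw⟩)⟩

theorem eq_of_left_eq_of_slope_eq (hG : IsPlaneGraph S E) (he : e ∈ E) (hf : f ∈ E)
    (hleft : e.left = f.left) (hslope : e.line.slope = f.line.slope) : e = f := by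
  by_contra hne
  refine hG.not_crosses he hf hne (Segment.crosses_of_line_eq_of_lt
    (NonverticalLine.eq_of_slope_eq hslope (a := e.left.1) ?_) (hleft ▸ f.fst_lt)
    (hleft ▸ e.fst_lt))
  rw [e.line_left, hleft, f.line_left]

theorem eq_of_right_eq_of_slope_eq (hG : IsPlaneGraph S E) (he : e ∈ E) (hf : f ∈ E)
    (hright : e.right = f.right) (hslope : e.line.slope = f.line.slope) : e = f := by
  by_contra hne
  refine hG.not_crosses he hf hne (Segment.crosses_of_line_eq_of_lt
    (NonverticalLine.eq_of_slope_eq hslope (a := e.right.1) ?_) (hright ▸ e.fst_lt)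
    (hright ▸ f.fst_lt))
  rw [e.line_right, hright, f.line_right]

theorem eq_of_isDirectlyBelow (hG : IsPlaneGraph S E) (he : e ∈ E) (hf : f ∈ E)
    (hew : IsDirectlyBelow E e w) (hfw : IsDirectlyBelow E f w) : e = f := by
  by_contra hne
  exact hG.not_crosses he hf hne ⟨w.1, hew.mem_shadow, hfw.mem_shadow, le_antisymm
    (hfw.line_le e he hew.mem_shadow hew.line_lt) (hew.line_le f hf hfw.mem_shadow hfw.line_lt)⟩

/-- Every edge is the steepest one leaving its left endpoint, the topmost one reaching its right
endpoint, or directly below some vertex; each vertex is charged at most once for each reason. -/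
theorem card_edges_le (hG : IsPlaneGraph S E) : #E ≤ 3 * #S := by
  classical
  let steepest := E.filter fun e => ∀ f ∈ E, f.left = e.left → f.line.slope ≤ e.line.slope
  let topmost := E.filter fun e => ∀ f ∈ E, f.right = e.right → e.line.slope ≤ f.line.slope
  let covered := E.filter fun e => ∃ w ∈ S, IsDirectlyBelow E e w
  have hcover : E ⊆ steepest ∪ topmost ∪ covered := by
    intro e he
    simp only [steepest, topmost, covered, mem_union, mem_filter, he, true_and]
    by_contra! hcon
    obtain ⟨⟨hf, hg⟩, hw⟩ := hcon
    obtain ⟨w, hwS, hw'⟩ := hG.exists_isDirectlyBelow he hf hg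
    exact hw w hwS hw'
  have hsteepest : #steepest ≤ #S := by
    refine card_le_card_of_forall_subsingleton (fun e w => e.left = w)
      (fun e he => ⟨e.left, (hG.isEdge e (mem_filter.1 he).1).left_mem, rfl⟩) ?_
    rintro w - e ⟨he, rfl⟩ f ⟨hf, hfe⟩
    obtain ⟨he, hmaxe⟩ := mem_filter.1 he
    obtain ⟨hf, hmaxf⟩ := mem_filter.1 hf
    exact hG.eq_of_left_eq_of_slope_eq he hf hfe.symm
      (le_antisymm (hmaxf e he hfe.symm) (hmaxe f hf hfe))
  have htopmost : #topmost ≤ #S := by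
    refine card_le_card_of_forall_subsingleton (fun e w => e.right = w)
      (fun e he => ⟨e.right, (hG.isEdge e (mem_filter.1 he).1).right_mem, rfl⟩) ?_
    rintro w - e ⟨he, rfl⟩ f ⟨hf, hfe⟩
    obtain ⟨he, hmine⟩ := mem_filter.1 he
    obtain ⟨hf, hminf⟩ := mem_filter.1 hf
    exact hG.eq_of_right_eq_of_slope_eq he hf hfe.symm
      (le_antisymm (hmine f hf hfe) (hminf e he hfe.symm))
  have hcovered : #covered ≤ #S :=
    card_le_card_of_forall_subsingleton (IsDirectlyBelow E) (fun e he => (mem_filter.1 he).2)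
      fun w _ e he f hf => hG.eq_of_isDirectlyBelow (mem_filter.1 he.1).1 (mem_filter.1 hf.1).1
        he.2 hf.2
  have := card_le_card hcover
  have := card_union_le (steepest ∪ topmost) covered
  have := card_union_le steepest topmost
  omega

end IsPlaneGraph

/-- The set of endpoints of a segment. -/
noncomputable def Segment.endpoints (e : Segment) : Finset (ℝ × ℝ) := {e.left, e.right}

open Classical in
/-- The ordered pairs of distinct crossing segments in `E`. -/
noncomputable def crossingPairs (E : Finset Segment) : Finset (Segment × Segment) :=
  {x ∈ E.offDiag | x.1.Crosses x.2}

theorem mem_crossingPairs {E : Finset Segment} {x : Segment × Segment} :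
    x ∈ crossingPairs E ↔ (x.1 ∈ E ∧ x.2 ∈ E ∧ x.1 ≠ x.2) ∧ x.1.Crosses x.2 := by
  simp only [crossingPairs, mem_filter, mem_offDiag]

namespace IsEdge

variable {S T : Finset (ℝ × ℝ)} {e f : Segment}

theorem endpoints_subset (he : IsEdge S e) : e.endpoints ⊆ S :=
  insert_subset he.left_mem (singleton_subset_iff.2 he.right_mem)

theorem anti (he : IsEdge S e) (hTS : T ⊆ S) (hT : e.endpoints ⊆ T) : IsEdge T e where
  left_mem := hT (mem_insert_self _ _)
  right_mem := hT (mem_insert_of_mem (mem_singleton_self _))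
  line_ne w hw := he.line_ne w (hTS hw)

theorem left_fst_le_of_line_eq (he : IsEdge S e) (hf : IsEdge S f) (h : e.line = f.line)
    (hfe : f.left.1 < e.right.1) : f.left.1 ≤ e.left.1 := by
  by_contra! hlt
  exact he.line_ne f.left hf.left_mem ⟨hlt, hfe⟩ (by rw [h, f.line_left])

theorem right_fst_le_of_line_eq (he : IsEdge S e) (hf : IsEdge S f) (h : e.line = f.line)
    (hef : e.left.1 < f.right.1) : e.right.1 ≤ f.right.1 := by
  by_contra! hlt
  exact he.line_ne f.right hf.right_mem ⟨hef, hlt⟩ (by rw [h, f.line_right])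

theorem eq_of_line_eq (he : IsEdge S e) (hf : IsEdge S f) (h : e.line = f.line)
    (hef : e.left.1 < f.right.1) (hfe : f.left.1 < e.right.1) : e = f := by
  have hleft : e.left.1 = f.left.1 :=
    (hf.left_fst_le_of_line_eq he h.symm hef).antisymm (he.left_fst_le_of_line_eq hf h hfe)
  have hright : e.right.1 = f.right.1 :=
    (he.right_fst_le_of_line_eq hf h hef).antisymm (hf.right_fst_le_of_line_eq he h.symm hfe)
  refine Segment.ext (Prod.ext hleft ?_) (Prod.ext hright ?_)
  · rw [← e.line_left, ← f.line_left, h, hleft]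
  · rw [← e.line_right, ← f.line_right, h, hright]

theorem line_ne_line (he : IsEdge S e) (hf : IsEdge S f) (hne : e ≠ f) (h : e.Crosses f) :
    e.line ≠ f.line := by
  obtain ⟨x, hxe, hxf, -⟩ := h
  exact fun hl => hne (he.eq_of_line_eq hf hl (hxe.1.trans hxf.2) (hxf.1.trans hxe.2))

theorem card_endpoints_union_endpoints (he : IsEdge S e) (hf : IsEdge S f) (hne : e ≠ f)
    (h : e.Crosses f) : #(e.endpoints ∪ f.endpoints) = 4 := by
  have hline := he.line_ne_line hf hne h
  obtain ⟨x, hxe, hxf, hx⟩ := h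
  have hll : e.left ≠ f.left := fun heq => hline <| NonverticalLine.eq_of_apply_eq hxe.1.ne
    (by rw [e.line_left, heq, f.line_left]) hx
  have hrr : e.right ≠ f.right := fun heq => hline <| NonverticalLine.eq_of_apply_eq hxe.2.ne'
    (by rw [e.line_right, heq, f.line_right]) hx
  have hlr : e.left ≠ f.right := fun heq => (hxe.1.trans hxf.2).ne (congrArg Prod.fst heq)
  have hrl : e.right ≠ f.left := fun heq => (hxf.1.trans hxe.2).ne' (congrArg Prod.fst heq)
  have hendpoints (g : Segment) : #g.endpoints = 2 :=
    card_pair fun heq => g.fst_lt.ne (congrArg Prod.fst heq)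
  rw [card_union_of_disjoint, hendpoints, hendpoints]
  simp only [Segment.endpoints, disjoint_insert_left, disjoint_singleton_left, mem_insert,
    mem_singleton, not_or]
  exact ⟨⟨hll, hlr⟩, hrl, hrr⟩

end IsEdge

section CrossingLemma

variable {P : Finset (ℝ × ℝ)} {E : Finset Segment}

theorem card_edges_le_add_card_crossingPairs (hE : ∀ e ∈ E, IsEdge P e) :
    #E ≤ 3 * #P + #(crossingPairs E) := by
  classical
  let crossing := (crossingPairs E).image Prod.fst
  have hplane : IsPlaneGraph P (E \ crossing) := by
    refine ⟨fun e he => hE e (mem_sdiff.1 he).1, fun e he f hf hne hcross => ?_⟩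
    rw [mem_coe, mem_sdiff] at he hf
    exact he.2 (mem_image.2 ⟨(e, f), mem_crossingPairs.2 ⟨⟨he.1, hf.1, hne⟩, hcross⟩, rfl⟩)
  have := hplane.card_edges_le
  have : #crossing ≤ #(crossingPairs E) := card_image_le
  have := le_card_sdiff crossing E
  omega

theorem crossingPairs_filter_endpoints_subset (E : Finset Segment) (T : Finset (ℝ × ℝ)) :
    crossingPairs {e ∈ E | e.endpoints ⊆ T} =
      {x ∈ crossingPairs E | x.1.endpoints ∪ x.2.endpoints ⊆ T} := by
  ext x
  simp only [mem_crossingPairs, mem_filter, union_subset_iff]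
  tauto

/-- The expected values of the terms of `card_edges_le_add_card_crossingPairs` for the subgraph
induced by a random set of vertices. -/
theorem sq_mul_card_edges_le (hE : ∀ e ∈ E, IsEdge P e) {p : ℝ} (hp : 0 ≤ p) (hp' : p ≤ 1) :
    p ^ 2 * #E ≤ 3 * (p * #P) + p ^ 4 * #(crossingPairs E) := by
  let weight (T : Finset (ℝ × ℝ)) : ℝ := p ^ #T * (1 - p) ^ (#P - #T)
  have hedges : ∑ T ∈ P.powerset, weight T * #{e ∈ E | e.endpoints ⊆ T} = p ^ 2 * #E := by
    rw [sum_powerset_mul_card_filter_subset fun e he => (hE e he).endpoints_subset,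
      sum_congr rfl fun e _ => by
        rw [Segment.endpoints, card_pair fun h => e.fst_lt.ne (congrArg Prod.fst h)],
      sum_const, nsmul_eq_mul, mul_comm]
  have hvertices : ∑ T ∈ P.powerset, weight T * #T = p * #P := by
    have h := sum_powerset_mul_card_filter_subset (I := P) (V := fun v => {v})
      (fun v hv => singleton_subset_iff.2 hv) p
    simp only [singleton_subset_iff, card_singleton, pow_one, sum_const, nsmul_eq_mul] at h
    rw [mul_comm p, ← h]
    refine sum_congr rfl fun T hT => ?_
    rw [filter_mem_eq_inter, inter_eq_right.2 (mem_powerset.1 hT)]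
  have hcrossings : ∑ T ∈ P.powerset, weight T * #(crossingPairs {e ∈ E | e.endpoints ⊆ T}) =
      p ^ 4 * #(crossingPairs E) := by
    simp only [crossingPairs_filter_endpoints_subset]
    have hmem {x : Segment × Segment} (hx : x ∈ crossingPairs E) :=
      And.intro (hE _ (mem_crossingPairs.1 hx).1.1) (hE _ (mem_crossingPairs.1 hx).1.2.1)
    rw [sum_powerset_mul_card_filter_subset fun x hx =>
        union_subset (hmem hx).1.endpoints_subset (hmem hx).2.endpoints_subset,
      sum_congr rfl fun x hx => by
        rw [(hmem hx).1.card_endpoints_union_endpoints (hmem hx).2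
          (mem_crossingPairs.1 hx).1.2.2 (mem_crossingPairs.1 hx).2],
      sum_const, nsmul_eq_mul, mul_comm]
  rw [← hedges, ← hvertices, ← hcrossings, mul_sum, ← sum_add_distrib]
  refine sum_le_sum fun T hT => ?_
  have hle : (#{e ∈ E | e.endpoints ⊆ T} : ℝ) ≤
      3 * #T + #(crossingPairs {e ∈ E | e.endpoints ⊆ T}) := by
    refine mod_cast card_edges_le_add_card_crossingPairs fun e he => ?_
    exact (hE e (mem_filter.1 he).1).anti (mem_powerset.1 hT) (mem_filter.1 he).2
  have hweight : 0 ≤ weight T := mul_nonneg (pow_nonneg hp _) (pow_nonneg (sub_nonneg.2 hp') _)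
  linarith [mul_le_mul_of_nonneg_left hle hweight]

/-- The crossing lemma, obtained from the sampling probability `6 * #P / #E`. -/
theorem card_edges_pow_three_le (hE : ∀ e ∈ E, IsEdge P e) (h : 6 * #P ≤ #E) :
    (#E : ℝ) ^ 3 ≤ 72 * #P ^ 2 * #(crossingPairs E) := by
  rcases E.eq_empty_or_nonempty with rfl | ⟨e, he⟩
  · rw [card_empty, Nat.cast_zero, zero_pow three_ne_zero]
    positivity
  have hEpos : (0 : ℝ) < #E := mod_cast card_pos.2 ⟨e, he⟩
  have hPpos : (0 : ℝ) < #P := mod_cast card_pos.2 ⟨_, (hE e he).left_mem⟩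
  have hp : (6 * #P / #E : ℝ) ≤ 1 := (div_le_one hEpos).2 (mod_cast h)
  have key := sq_mul_card_edges_le hE (by positivity) hp
  field_simp at key
  linarith

end CrossingLemma

section RichLines

open NonverticalLine

variable {P : Finset (ℝ × ℝ)} {l : NonverticalLine} {L : Finset NonverticalLine}

/-- The points of `P` on the line `l`. -/
noncomputable def pointsOn (P : Finset (ℝ × ℝ)) (l : NonverticalLine) : Finset (ℝ × ℝ) :=
  {p ∈ P | l p.1 = p.2}

theorem mem_pointsOn {p : ℝ × ℝ} : p ∈ pointsOn P l ↔ p ∈ P ∧ l p.1 = p.2 :=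
  mem_filter

theorem finite_setOf_isEdge (P : Finset (ℝ × ℝ)) : {e | IsEdge P e}.Finite := by
  refine Set.Finite.of_finite_image (f := fun e : Segment => (e.left, e.right))
    ((P ×ˢ P).finite_toSet.subset ?_) fun e _ f _ h => ?_
  · rintro - ⟨e, he, rfl⟩
    exact mem_coe.2 (mem_product.2 ⟨he.left_mem, he.right_mem⟩)
  · exact Segment.ext (congrArg Prod.fst h) (congrArg Prod.snd h)

open Classical in
/-- The segments between consecutive points of `P` on a line in `L`. -/
noncomputable def edgesOn (P : Finset (ℝ × ℝ)) (L : Finset NonverticalLine) : Finset Segment :=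
  {e ∈ (finite_setOf_isEdge P).toFinset | e.line ∈ L}

theorem mem_edgesOn {e : Segment} : e ∈ edgesOn P L ↔ IsEdge P e ∧ e.line ∈ L := by
  simp only [edgesOn, mem_filter, Set.Finite.mem_toFinset, Set.mem_ofPred_eq]

theorem exists_isEdge_left_eq {p q : ℝ × ℝ} (hp : p ∈ pointsOn P l) (hq : q ∈ pointsOn P l)
    (hpq : p.1 < q.1) : ∃ e, IsEdge P e ∧ e.line = l ∧ e.left = p := by
  obtain ⟨r, hr, hmin⟩ := exists_min_image {r ∈ pointsOn P l | p.1 < r.1} Prod.fst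
    ⟨q, mem_filter.2 ⟨hq, hpq⟩⟩
  obtain ⟨hr, hpr⟩ := mem_filter.1 hr
  rw [mem_pointsOn] at hp hr
  have hline : l = through p r := eq_through hpr.ne hp.2 hr.2
  refine ⟨⟨p, r, hpr⟩, ⟨hp.1, hr.1, fun w hw hshadow hwl => ?_⟩, hline.symm, rfl⟩
  refine (hmin w (mem_filter.2 ⟨mem_pointsOn.2 ⟨hw, ?_⟩, hshadow.1⟩)).not_gt hshadow.2
  rw [hline]
  exact hwl

theorem card_pointsOn_le_card_edges_add_one (P : Finset (ℝ × ℝ)) (l : NonverticalLine) :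
    #(pointsOn P l) ≤ #(edgesOn P {l}) + 1 := by
  rcases (pointsOn P l).eq_empty_or_nonempty with h | h
  · simp only [h, card_empty, Nat.zero_le]
  obtain ⟨z, hz, hmax⟩ := exists_max_image _ Prod.fst h
  have hfst {p : ℝ × ℝ} (hp : p ∈ (pointsOn P l).erase z) : p.1 < z.1 := by
    obtain ⟨hne, hp⟩ := mem_erase.1 hp
    refine (hmax p hp).lt_of_ne fun heq => hne (Prod.ext heq ?_)
    rw [← (mem_pointsOn.1 hp).2, ← (mem_pointsOn.1 hz).2, heq]
  suffices #((pointsOn P l).erase z) ≤ #(edgesOn P {l}) by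
    rw [card_erase_of_mem hz] at this
    omega
  refine card_le_card_of_forall_subsingleton (fun p e => e.left = p) (fun p hp => ?_) ?_
  · obtain ⟨e, he, hline, hleft⟩ := exists_isEdge_left_eq (mem_of_mem_erase hp) hz (hfst hp)
    exact ⟨e, mem_edgesOn.2 ⟨he, mem_singleton.2 hline⟩, hleft⟩
  · rintro e - p ⟨-, rfl⟩ q ⟨-, rfl⟩
    rfl

theorem mul_card_le_card_edgesOn_add_card {k : ℕ} (hk : ∀ l ∈ L, k ≤ #(pointsOn P l)) :
    k * #L ≤ #(edgesOn P L) + #L := by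
  classical
  have hfiber {l : NonverticalLine} (hl : l ∈ L) :
      {e ∈ edgesOn P L | e.line = l} = edgesOn P {l} := by
    ext e
    simp only [mem_filter, mem_edgesOn, mem_singleton]
    constructor
    · rintro ⟨⟨he, -⟩, rfl⟩
      exact ⟨he, rfl⟩
    · rintro ⟨he, rfl⟩
      exact ⟨⟨he, hl⟩, rfl⟩
  calc k * #L = ∑ _l ∈ L, k := by rw [sum_const, smul_eq_mul, mul_comm]
    _ ≤ ∑ l ∈ L, (#(edgesOn P {l}) + 1) :=
      sum_le_sum fun l hl => (hk l hl).trans (card_pointsOn_le_card_edges_add_one P l)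
    _ = ∑ l ∈ L, #{e ∈ edgesOn P L | e.line = l} + #L := by
      rw [sum_add_distrib, card_eq_sum_ones L, sum_congr rfl fun l hl => by rw [← hfiber hl]]
    _ = #(edgesOn P L) + #L := by
      rw [← card_eq_sum_card_fiberwise fun e he => (mem_edgesOn.1 he).2]

theorem card_crossingPairs_edgesOn_le (P : Finset (ℝ × ℝ)) (L : Finset NonverticalLine) :
    #(crossingPairs (edgesOn P L)) ≤ #L ^ 2 := by
  rw [sq, ← card_product]
  refine card_le_card_of_injOn (fun x => (x.1.line, x.2.line)) (fun x hx => ?_) ?_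
  · obtain ⟨⟨he, hf, -⟩, -⟩ := mem_crossingPairs.1 hx
    exact mem_product.2 ⟨(mem_edgesOn.1 he).2, (mem_edgesOn.1 hf).2⟩
  rintro ⟨e, f⟩ hx ⟨e', f'⟩ hx' heq
  obtain ⟨⟨he, hf, hef⟩, hcross⟩ := mem_crossingPairs.1 hx
  obtain ⟨⟨he', hf', -⟩, y, hye, hyf, hy⟩ := mem_crossingPairs.1 hx'
  dsimp only at he hf hef hcross he' hf' hye hyf hy
  rw [mem_edgesOn] at he hf he' hf'
  obtain ⟨hline, hline'⟩ := Prod.ext_iff.1 heq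
  dsimp only at hline hline'
  have hne := he.1.line_ne_line hf.1 hef hcross
  obtain ⟨x, hxe, hxf, hx⟩ := hcross
  rw [← hline, ← hline'] at hy
  obtain rfl : x = y := by
    by_contra hxy
    exact hne (eq_of_apply_eq hxy hx hy)
  rw [he.1.eq_of_line_eq he'.1 hline (hxe.1.trans hye.2) (hye.1.trans hxe.2),
    hf.1.eq_of_line_eq hf'.1 hline' (hxf.1.trans hyf.2) (hyf.1.trans hxf.2)]

/-- The Szemerédi–Trotter bound: the segments between consecutive points have few crossings, so by
the crossing lemma there are few of them. -/
theorem card_le_of_forall_le_card_pointsOn {k : ℕ} (hk : 2 ≤ k)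
    (hL : ∀ l ∈ L, k ≤ #(pointsOn P l)) :
    (#L : ℝ) ≤ 576 * #P ^ 2 / k ^ 3 + 12 * #P / k := by
  have hk' : (2 : ℝ) ≤ k := mod_cast hk
  have hedges : (k / 2 * #L : ℝ) ≤ #(edgesOn P L) :=
    calc (k / 2 * #L : ℝ) ≤ (k - 1) * #L := by gcongr; linarith
      _ ≤ #(edgesOn P L) := by
        have : (k * #L : ℝ) ≤ #(edgesOn P L) + #L :=
          mod_cast mul_card_le_card_edgesOn_add_card hL
        linarith
  rcases lt_or_ge #(edgesOn P L) (6 * #P) with hfew | hmany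
  · have hfew' : (#(edgesOn P L) : ℝ) ≤ 6 * #P := mod_cast hfew.le
    have : (#L : ℝ) ≤ 12 * #P / k := by
      rw [le_div_iff₀ (by positivity)]
      linarith
    exact this.trans (le_add_of_nonneg_left (by positivity))
  · have hcross : (#(crossingPairs (edgesOn P L)) : ℝ) ≤ #L ^ 2 :=
      mod_cast card_crossingPairs_edgesOn_le P L
    have hcube : (k / 2 * #L : ℝ) ^ 3 ≤ 72 * #P ^ 2 * #L ^ 2 :=
      calc (k / 2 * #L : ℝ) ^ 3 ≤ (#(edgesOn P L) : ℝ) ^ 3 := by gcongr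
        _ ≤ (72 * #P ^ 2 * #(crossingPairs (edgesOn P L)) : ℝ) :=
          card_edges_pow_three_le (fun e he => (mem_edgesOn.1 he).1) hmany
        _ ≤ (72 * #P ^ 2 * #L ^ 2 : ℝ) := by gcongr
    have : (#L : ℝ) ≤ 576 * #P ^ 2 / k ^ 3 := by
      rcases (#L).eq_zero_or_pos with h0 | hpos
      · rw [h0, Nat.cast_zero]
        positivity
      have hpos' : (0 : ℝ) < #L := mod_cast hpos
      rw [le_div_iff₀ (by positivity)]
      refine le_of_mul_le_mul_right ?_ (pow_pos hpos' 2)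
      linarith
    exact this.trans (le_add_of_nonneg_right (by positivity))

end RichLines

section WeakDirac

open NonverticalLine

variable {P : Finset (ℝ × ℝ)} {l : NonverticalLine} {L : Finset NonverticalLine} {k M : ℕ}

theorem sum_sq_card_pointsOn_le (hk : 2 ≤ k) (hL : ∀ l ∈ L, k ≤ #(pointsOn P l))
    (hM : ∀ l ∈ L, #(pointsOn P l) ≤ M) :
    ∑ l ∈ L, (#(pointsOn P l) : ℝ) ^ 2 ≤
      1728 * #P ^ 2 / k + 12 * #P * k + 24 * #P * M := by
  rcases L.eq_empty_or_nonempty with rfl | ⟨l, hl⟩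
  · rw [sum_empty]
    positivity
  have hkM : k ≤ M := (hL l hl).trans (hM l hl)
  have hkpos : (0 : ℝ) < k := Nat.cast_pos.2 (by omega)
  have hbase : (#L * k ^ 2 : ℝ) ≤ 576 * #P ^ 2 / k + 12 * #P * k :=
    calc (#L * k ^ 2 : ℝ) ≤ (576 * #P ^ 2 / k ^ 3 + 12 * #P / k) * k ^ 2 := by
          gcongr
          exact card_le_of_forall_le_card_pointsOn hk hL
      _ = 576 * #P ^ 2 / k + 12 * #P * k := by field_simp
  have hlayer {i : ℕ} (hi : i ∈ Ioc k M) : (#{l ∈ L | i ≤ #(pointsOn P l)} * (2 * i) : ℝ) ≤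
      1152 * #P ^ 2 * ((i : ℝ) ^ 2)⁻¹ + 24 * #P := by
    have hki := (mem_Ioc.1 hi).1
    have hipos : (0 : ℝ) < i := Nat.cast_pos.2 (by omega)
    calc (#{l ∈ L | i ≤ #(pointsOn P l)} * (2 * i) : ℝ)
        ≤ (576 * #P ^ 2 / i ^ 3 + 12 * #P / i) * (2 * i) := by
          gcongr
          exact card_le_of_forall_le_card_pointsOn (by omega) fun l hl => (mem_filter.1 hl).2
      _ = 1152 * #P ^ 2 * ((i : ℝ) ^ 2)⁻¹ + 24 * #P := by
          field_simp
          ring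
  have hinv : ∑ i ∈ Ioc k M, ((i : ℝ) ^ 2)⁻¹ ≤ (k : ℝ)⁻¹ :=
    (sum_Ioc_inv_sq_le_sub (by omega) hkM).trans (sub_le_self _ (by positivity))
  calc ∑ l ∈ L, (#(pointsOn P l) : ℝ) ^ 2
      ≤ #L * k ^ 2 + ∑ i ∈ Ioc k M, #{l ∈ L | i ≤ #(pointsOn P l)} * (2 * i : ℝ) := by
        exact_mod_cast sum_sq_le_mul_sq_add_sum_Ioc hM k
    _ ≤ 576 * #P ^ 2 / k + 12 * #P * k +
          (1152 * #P ^ 2 * ∑ i ∈ Ioc k M, ((i : ℝ) ^ 2)⁻¹ + (M - k) * (24 * #P)) := by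
        refine add_le_add hbase ((sum_le_sum fun i hi => hlayer hi).trans_eq ?_)
        rw [sum_add_distrib, ← mul_sum, sum_const, Nat.card_Ioc, nsmul_eq_mul, Nat.cast_sub hkM]
    _ ≤ 576 * #P ^ 2 / k + 12 * #P * k + (1152 * #P ^ 2 * (k : ℝ)⁻¹ + M * (24 * #P)) := by
        gcongr
        exact sub_le_self _ hkpos.le
    _ = 1728 * #P ^ 2 / k + 12 * #P * k + 24 * #P * M := by ring

open Classical in
/-- The lines that join `q` to the other points of `P`. -/
noncomputable def linesThrough (P : Finset (ℝ × ℝ)) (q : ℝ × ℝ) : Finset NonverticalLine :=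
  (P.erase q).image (through q)

theorem mem_linesThrough {q : ℝ × ℝ} :
    l ∈ linesThrough P q ↔ ∃ p ∈ P.erase q, through q p = l := by
  simp only [linesThrough, mem_image]

theorem card_pointsOn_le_card_linesThrough (hP : Set.InjOn Prod.fst (P : Set (ℝ × ℝ)))
    {q : ℝ × ℝ} (hq : q ∈ P) (hql : l q.1 ≠ q.2) : #(pointsOn P l) ≤ #(linesThrough P q) := by
  have hne {p : ℝ × ℝ} (hp : p ∈ pointsOn P l) : p ≠ q := by
    rintro rfl
    exact hql (mem_pointsOn.1 hp).2
  refine card_le_card_of_injOn (through q) (fun p hp => mem_linesThrough.2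
    ⟨p, mem_erase.2 ⟨hne hp, (mem_pointsOn.1 hp).1⟩, rfl⟩) fun p hp p' hp' heq => ?_
  have hthrough {r : ℝ × ℝ} (hr : r ∈ pointsOn P l) : through q r r.1 = r.2 :=
    through_apply_right (hP.ne hq (mem_pointsOn.1 hr).1 (hne hr).symm)
  by_contra hpp'
  obtain ⟨hpP, hpl⟩ := mem_pointsOn.1 hp
  obtain ⟨hpP', hpl'⟩ := mem_pointsOn.1 hp'
  have : l = through q p := eq_of_apply_eq (hP.ne hpP hpP' hpp')
    (hpl.trans (hthrough hp).symm) (by rw [hpl', heq, hthrough hp'])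
  exact hql (by rw [this, through_apply_left])

theorem card_erase_le_sum_card_pointsOn (hP : Set.InjOn Prod.fst (P : Set (ℝ × ℝ)))
    {q : ℝ × ℝ} (hq : q ∈ P) :
    #(P.erase q) ≤ ∑ l ∈ linesThrough P q, #(pointsOn P l) := by
  refine (card_le_card fun p hp => ?_).trans card_biUnion_le
  obtain ⟨hpq, hpP⟩ := mem_erase.1 hp
  exact mem_biUnion.2 ⟨through q p, mem_linesThrough.2 ⟨p, hp, rfl⟩,
    mem_pointsOn.2 ⟨hpP, through_apply_right (hP.ne hq hpP hpq.symm)⟩⟩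

open Classical in
/-- The lines spanned by `P` that contain at least `k` points of `P`. -/
noncomputable def richLines (P : Finset (ℝ × ℝ)) (k : ℕ) : Finset NonverticalLine :=
  {l ∈ P.biUnion (linesThrough P) | k ≤ #(pointsOn P l)}

theorem mem_richLines :
    l ∈ richLines P k ↔ (∃ q ∈ P, l ∈ linesThrough P q) ∧ k ≤ #(pointsOn P l) := by
  simp only [richLines, mem_filter, mem_biUnion]

theorem card_erase_le_mul_add_sum_richLines (hP : Set.InjOn Prod.fst (P : Set (ℝ × ℝ)))
    {q : ℝ × ℝ} (hq : q ∈ P) (k : ℕ) :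
    #(P.erase q) ≤ #(linesThrough P q) * k +
      ∑ l ∈ richLines P k with q ∈ pointsOn P l, #(pointsOn P l) := by
  refine (card_erase_le_sum_card_pointsOn hP hq).trans ?_
  rw [← sum_filter_not_add_sum_filter _ (fun l => k ≤ #(pointsOn P l))]
  refine add_le_add ?_ (sum_le_sum_of_subset fun l hl => ?_)
  · refine (sum_le_card_nsmul _ _ k fun l hl => (not_le.1 (mem_filter.1 hl).2).le).trans ?_
    exact Nat.mul_le_mul_right k (card_filter_le _ _)
  · obtain ⟨hl, hkl⟩ := mem_filter.1 hl
    obtain ⟨p, -, rfl⟩ := mem_linesThrough.1 hl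
    exact mem_filter.2 ⟨mem_richLines.2 ⟨⟨q, hq, hl⟩, hkl⟩,
      mem_pointsOn.2 ⟨hq, through_apply_left q p⟩⟩

theorem card_mul_card_le (hP : Set.InjOn Prod.fst (P : Set (ℝ × ℝ)))
    (hM : ∀ q ∈ P, #(linesThrough P q) ≤ M) (k : ℕ) :
    #P * #P ≤ #P * (M * k + 1) + ∑ l ∈ richLines P k, #(pointsOn P l) ^ 2 := by
  have hpoint {q : ℝ × ℝ} (hq : q ∈ P) : #P ≤ M * k + 1 +
      ∑ l ∈ richLines P k with q ∈ pointsOn P l, #(pointsOn P l) := by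
    have h := card_erase_le_mul_add_sum_richLines hP hq k
    have := card_erase_add_one hq
    have := Nat.mul_le_mul_right k (hM q hq)
    omega
  calc #P * #P = ∑ _q ∈ P, #P := by rw [sum_const, smul_eq_mul]
    _ ≤ ∑ q ∈ P, (M * k + 1 +
          ∑ l ∈ richLines P k with q ∈ pointsOn P l, #(pointsOn P l)) :=
        sum_le_sum fun q hq => hpoint hq
    _ = #P * (M * k + 1) + ∑ l ∈ richLines P k, ∑ _q ∈ pointsOn P l, #(pointsOn P l) := by
        rw [sum_add_distrib, sum_const, smul_eq_mul, sum_comm' fun q l => ?_]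
        rw [mem_filter]
        exact ⟨fun h => h.2.symm, fun h => ⟨(mem_pointsOn.1 h.1).1, h.symm⟩⟩
    _ = #P * (M * k + 1) + ∑ l ∈ richLines P k, #(pointsOn P l) ^ 2 := by
        simp only [sum_const, smul_eq_mul, sq]

/-- With `k = 6912`, the leading term `1728 * #P ^ 2 / k` of `sum_sq_card_pointsOn_le` is a
quarter of `#P ^ 2`. -/
theorem card_le_of_forall_card_linesThrough_le (hP : Set.InjOn Prod.fst (P : Set (ℝ × ℝ)))
    (hline : ∀ l : NonverticalLine, ∃ q ∈ P, l q.1 ≠ q.2)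
    (hM : ∀ q ∈ P, #(linesThrough P q) ≤ M) : #P ≤ 120000 * M := by
  have hpoints (l : NonverticalLine) : #(pointsOn P l) ≤ M :=
    let ⟨q, hq, hql⟩ := hline l
    (card_pointsOn_le_card_linesThrough hP hq hql).trans (hM q hq)
  obtain ⟨q, hq, -⟩ := hline ⟨0, 0⟩
  have hMpos : (1 : ℝ) ≤ M := Nat.one_le_cast.2 <|
    (card_pos.2 ⟨q, mem_pointsOn.2 ⟨hq, through_apply_left q q⟩⟩).trans_le (hpoints _)
  have hPpos : (0 : ℝ) < #P := Nat.cast_pos.2 (card_pos.2 ⟨q, hq⟩)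
  have hcount : (#P * #P : ℝ) ≤
      #P * (M * 6912 + 1) + ∑ l ∈ richLines P 6912, (#(pointsOn P l) : ℝ) ^ 2 :=
    mod_cast card_mul_card_le hP hM 6912
  have hrich := sum_sq_card_pointsOn_le (P := P) (L := richLines P 6912) (by norm_num)
    (fun l hl => (mem_richLines.1 hl).2) fun l _ => hpoints l
  push_cast at hrich
  have : (#P * #P : ℝ) ≤ #P * (120000 * M) := by
    linarith [mul_le_mul_of_nonneg_left hMpos hPpos.le]
  exact_mod_cast le_of_mul_le_mul_left this hPpos

theorem exists_card_le_mul_card_linesThrough (hP : Set.InjOn Prod.fst (P : Set (ℝ × ℝ)))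
    (hline : ∀ l : NonverticalLine, ∃ q ∈ P, l q.1 ≠ q.2) :
    ∃ q ∈ P, #P ≤ 120000 * #(linesThrough P q) := by
  obtain ⟨p, hp, -⟩ := hline ⟨0, 0⟩
  obtain ⟨q, hq, hmax⟩ := exists_max_image P (fun q => #(linesThrough P q)) ⟨p, hp⟩
  exact ⟨q, hq, card_le_of_forall_card_linesThrough_le hP hline hmax⟩

end WeakDirac

section AffinePlane

open AffineSubspace

variable {V Pt : Type*} [AddCommGroup V] [Module ℝ V] [AddTorsor V Pt]

theorem collinear_image {k V₁ V₂ P₁ P₂ : Type*} [DivisionRing k] [AddCommGroup V₁] [Module k V₁]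
    [AddTorsor V₁ P₁] [AddCommGroup V₂] [Module k V₂] [AddTorsor V₂ P₂] {s : Set P₁}
    (hs : Collinear k s) (f : P₁ →ᵃ[k] P₂) : Collinear k (f '' s) := by
  obtain ⟨p₀, v, h⟩ := (collinear_iff_exists_forall_eq_smul_vadd s).1 hs
  refine (collinear_iff_exists_forall_eq_smul_vadd _).2 ⟨f p₀, f.linear v, ?_⟩
  rintro - ⟨p, hp, rfl⟩
  obtain ⟨r, rfl⟩ := h p hp
  exact ⟨r, by rw [f.map_vadd, map_smul]⟩

theorem NonverticalLine.collinear_graph (l : NonverticalLine) :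
    Collinear ℝ {p : ℝ × ℝ | l p.1 = p.2} := by
  refine (collinear_iff_exists_forall_eq_smul_vadd _).2
    ⟨(0, l.intercept), (1, l.slope), fun p hp => ⟨p.1, Prod.ext ?_ ?_⟩⟩
  · simp
  · simp [← hp.out, NonverticalLine.height, mul_comm]

theorem NonverticalLine.apply_lineMap {l : NonverticalLine} {p q : ℝ × ℝ} (hp : l p.1 = p.2)
    (hq : l q.1 = q.2) (t : ℝ) :
    l (AffineMap.lineMap p q t).1 = (AffineMap.lineMap p q t).2 := by
  simp only [AffineMap.lineMap_apply, vsub_eq_sub, vadd_eq_add, Prod.fst_add, Prod.snd_add,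
    Prod.smul_fst, Prod.smul_snd, Prod.fst_sub, Prod.snd_sub, smul_eq_mul, ← hp, ← hq, height]
  ring

theorem exists_shear_injOn (P : Finset (ℝ × ℝ)) :
    ∃ s : ℝ, Set.InjOn (fun p : ℝ × ℝ => p.1 + s * p.2) P := by
  obtain ⟨s, hs⟩ := Infinite.exists_notMem_finset
    (P.offDiag.image fun x => (x.1.1 - x.2.1) / (x.2.2 - x.1.2))
  refine ⟨s, fun p hp q hq h => ?_⟩
  by_contra hpq
  dsimp only at h
  have hsnd : q.2 - p.2 ≠ 0 := by
    refine fun h0 => hpq (Prod.ext ?_ (sub_eq_zero.1 h0).symm)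
    rwa [sub_eq_zero.1 h0, add_left_inj] at h
  exact hs (mem_image.2 ⟨(p, q), mem_offDiag.2 ⟨hp, hq, hpq⟩,
    (eq_div_of_mul_eq hsnd (by linarith)).symm⟩)

theorem exists_affineEquiv_injOn_fst (hV : Module.finrank ℝ V = 2) (P : Finset Pt) :
    ∃ φ : Pt ≃ᵃ[ℝ] ℝ × ℝ, Set.InjOn (fun p => (φ p).1) P := by
  have : FiniteDimensional ℝ V := Module.finite_of_finrank_eq_succ hV
  let ψ : Pt ≃ᵃ[ℝ] ℝ × ℝ := (AffineEquiv.vaddConst ℝ (Classical.arbitrary Pt)).symm.trans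
    (LinearEquiv.ofFinrankEq V (ℝ × ℝ) (by simp [hV])).toAffineEquiv
  obtain ⟨s, hs⟩ := exists_shear_injOn (P.map ψ.toEquiv.toEmbedding)
  let shear : (ℝ × ℝ) ≃ₗ[ℝ] ℝ × ℝ := LinearEquiv.prodComm ℝ ℝ ℝ ≪≫ₗ
    (LinearEquiv.refl ℝ ℝ).skewProd (.refl ℝ ℝ) (s • .id) ≪≫ₗ LinearEquiv.prodComm ℝ ℝ ℝ
  refine ⟨ψ.trans shear.toAffineEquiv, fun p hp q hq h => ψ.injective (hs ?_ ?_ ?_)⟩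
  · simpa using hp
  · simpa using hq
  · simpa [shear] using h

theorem through_eq_through_of_line_eq {φ : Pt ≃ᵃ[ℝ] ℝ × ℝ} {q r r' : Pt}
    (hr : (φ q).1 ≠ (φ r).1) (hr' : (φ q).1 ≠ (φ r').1) (h : line[ℝ, q, r] = line[ℝ, q, r']) :
    NonverticalLine.through (φ q) (φ r) = .through (φ q) (φ r') := by
  obtain ⟨t, rfl⟩ := mem_affineSpan_pair_iff_exists_lineMap_eq.1
    (h ▸ right_mem_affineSpan_pair ℝ q r')
  refine NonverticalLine.eq_through hr' (NonverticalLine.through_apply_left _ _) ?_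
  rw [AffineEquiv.apply_lineMap]
  exact NonverticalLine.apply_lineMap (NonverticalLine.through_apply_left _ _)
    (NonverticalLine.through_apply_right hr) t

open Classical in
/-- The weak Dirac theorem of Beck and Szemerédi–Trotter. -/
theorem exists_card_le_mul_card_image_line (hV : Module.finrank ℝ V = 2) {P : Finset Pt}
    (hP : ¬ Collinear ℝ (P : Set Pt)) :
    ∃ q ∈ P, #P ≤ 120000 * #((P.erase q).image fun r => line[ℝ, q, r]) := by
  obtain ⟨φ, hφ⟩ := exists_affineEquiv_injOn_fst hV P
  have hline (l : NonverticalLine) : ∃ x ∈ P.map φ.toEquiv.toEmbedding, l x.1 ≠ x.2 := by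
    by_contra! h
    refine hP (Collinear.subset (fun p hp => ?_)
      (collinear_image l.collinear_graph φ.symm.toAffineMap))
    exact ⟨φ p, h _ (mem_map_of_mem _ hp), φ.symm_apply_apply p⟩
  have hinj : Set.InjOn Prod.fst (P.map φ.toEquiv.toEmbedding : Set (ℝ × ℝ)) := by
    rw [coe_map]
    exact Set.InjOn.image_of_comp hφ
  obtain ⟨x, hx, hcard⟩ := exists_card_le_mul_card_linesThrough hinj hline
  obtain ⟨q, hq, rfl⟩ := mem_map.1 hx
  rw [card_map] at hcard
  refine ⟨q, hq, hcard.trans (Nat.mul_le_mul_left _ ?_)⟩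
  have hfst {r : Pt} (hr : r ∈ P.erase q) : (φ q).1 ≠ (φ r).1 :=
    hφ.ne hq (mem_of_mem_erase hr) (ne_of_mem_erase hr).symm
  refine card_le_card_of_forall_subsingleton
    (fun l l' => ∃ r ∈ P.erase q, .through (φ q) (φ r) = l ∧ line[ℝ, q, r] = l') ?_ ?_
  · intro l hl
    obtain ⟨x, hx, rfl⟩ := mem_linesThrough.1 hl
    obtain ⟨hne, hx⟩ := mem_erase.1 hx
    obtain ⟨r, hr, rfl⟩ := mem_map.1 hx
    have hr' : r ∈ P.erase q := mem_erase.2 ⟨fun h => hne (h ▸ rfl), hr⟩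
    exact ⟨line[ℝ, q, r], mem_image_of_mem _ hr', r, hr', rfl, rfl⟩
  · rintro l' - l ⟨-, r, hr, rfl, hl⟩ m ⟨-, r', hr', rfl, hm⟩
    exact through_eq_through_of_line_eq (hfst hr) (hfst hr') (hl.trans hm.symm)

end AffinePlane

section Angles

open EuclideanGeometry

variable {V Pt : Type*} [NormedAddCommGroup V] [InnerProductSpace ℝ V] [MetricSpace Pt]
  [NormedAddTorsor V Pt] {p q r r' : Pt}

theorem line_eq_line_of_angle_eq_of_oangle_sign_eq [Fact (Module.finrank ℝ V = 2)]
    [Module.Oriented ℝ V (Fin 2)] (hp : p ≠ q) (hr : r ≠ q) (hr' : r' ≠ q)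
    (hangle : ∠ p q r = ∠ p q r') (hsign : (∡ p q r).sign = (∡ p q r').sign) :
    line[ℝ, q, r] = line[ℝ, q, r'] := by
  have hoangle : ∡ p q r = ∡ p q r' := oangle_eq_of_angle_eq_of_sign_eq hangle hsign
  have hzero : ∡ r q r' = 0 := by
    rw [← oangle_add hr hp hr', ← hoangle, oangle_rev p q r, neg_add_cancel]
  have hcol : Collinear ℝ {r, q, r'} :=
    oangle_eq_zero_or_eq_pi_iff_collinear.1 (Or.inl hzero)
  rw [hcol.affineSpan_eq_of_ne (by simp) (by simp) hr.symm,
    hcol.affineSpan_eq_of_ne (by simp) (by simp) hr'.symm]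

open Classical in
theorem card_image_line_le_three_mul_card_image_angle [Fact (Module.finrank ℝ V = 2)]
    {s : Finset Pt} (hp : p ≠ q) (hq : q ∉ s) :
    #(s.image fun r => line[ℝ, q, r]) ≤ 3 * #(s.image fun r => ∠ p q r) := by
  have := FiniteDimensional.of_fact_finrank_eq_two (K := ℝ) (V := V)
  let : Module.Oriented ℝ V (Fin 2) :=
    ⟨(Module.finBasisOfFinrankEq ℝ V Fact.out).orientation⟩
  have hne {r : Pt} (hr : r ∈ s) : r ≠ q := ne_of_mem_of_not_mem hr hq
  calc #(s.image fun r => line[ℝ, q, r])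
      ≤ #((univ : Finset SignType) ×ˢ s.image fun r => ∠ p q r) := by
        refine card_le_card_of_forall_subsingleton
          (fun l x => ∃ r ∈ s, line[ℝ, q, r] = l ∧ ((∡ p q r).sign, ∠ p q r) = x) ?_ ?_
        · intro l hl
          obtain ⟨r, hr, rfl⟩ := mem_image.1 hl
          exact ⟨_, mem_product.2 ⟨mem_univ _, mem_image_of_mem _ hr⟩, r, hr, rfl, rfl⟩
        · rintro x - l ⟨-, r, hr, rfl, hx⟩ l' ⟨-, r', hr', rfl, hx'⟩
          obtain ⟨hsign, hangle⟩ := Prod.ext_iff.1 (hx.trans hx'.symm)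
          exact line_eq_line_of_angle_eq_of_oangle_sign_eq hp (hne hr) (hne hr') hangle hsign
    _ = 3 * #(s.image fun r => ∠ p q r) := by rw [card_product]; rfl

/-- The set `𝒜(P)` of all angles `∠ p q r` with `p ≠ q ≠ r` in `P`. -/
def angleSet (P : Finset Pt) : Set ℝ :=
  {θ | ∃ p ∈ P, ∃ q ∈ P, ∃ r ∈ P, p ≠ q ∧ r ≠ q ∧ ∠ p q r = θ}

theorem finite_angleSet (P : Finset Pt) : (angleSet P).Finite := by
  refine ((P ×ˢ P ×ˢ P).finite_toSet.image fun x => ∠ x.1 x.2.1 x.2.2).subset ?_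
  rintro - ⟨p, hp, q, hq, r, hr, -, -, rfl⟩
  exact ⟨(p, q, r), mem_product.2 ⟨hp, mem_product.2 ⟨hq, hr⟩⟩, rfl⟩

open Classical in
theorem card_image_angle_le_ncard_angleSet {P : Finset Pt} (hp : p ∈ P.erase q) (hq : q ∈ P) :
    #((P.erase q).image fun r => ∠ p q r) ≤ (angleSet P).ncard := by
  rw [← Set.ncard_coe_finset]
  refine Set.ncard_le_ncard (fun θ hθ => ?_) (finite_angleSet P)
  obtain ⟨r, hr, rfl⟩ := mem_image.1 hθ
  exact ⟨p, mem_of_mem_erase hp, q, hq, r, mem_of_mem_erase hr, ne_of_mem_erase hp,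
    ne_of_mem_erase hr, rfl⟩

end Angles

end PlanarIncidence

open PlanarIncidence in
theorem distinct_angles_linear_bound_general {V Pt : Type*} [NormedAddCommGroup V]
    [InnerProductSpace ℝ V] [MetricSpace Pt] [NormedAddTorsor V Pt]
    [hV : Fact (Module.finrank ℝ V = 2)] {P : Finset Pt} (hP : ¬ Collinear ℝ (P : Set Pt)) :
    P.card ≤ 360000 * (angleSet P).ncard := by
  classical
  obtain ⟨q, hq, hlines⟩ := exists_card_le_mul_card_image_line hV.out hP
  rcases (P.erase q).eq_empty_or_nonempty with hempty | ⟨p, hp⟩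
  · rw [hempty, Finset.image_empty, Finset.card_empty, mul_zero] at hlines
    exact hlines.trans (Nat.zero_le _)
  have hangles := card_image_line_le_three_mul_card_image_angle (Finset.ne_of_mem_erase hp)
    (Finset.notMem_erase q P)
  have hsubset := card_image_angle_le_ncard_angleSet hp hq
  omega

/-- There is an absolute constant `c > 0` such that every finite non-collinear point set
`P ⊆ ℝ²` determines at least `c·|P|` distinct angles. -/
theorem distinct_angles_linear_bound :
    ∃ c : ℝ, 0 < c ∧
      ∀ P : Finset (EuclideanSpace ℝ (Fin 2)),
        ¬ Collinear ℝ (P : Set (EuclideanSpace ℝ (Fin 2))) →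
        c * (P.card : ℝ) ≤
          ({θ : ℝ | ∃ p ∈ P, ∃ q ∈ P, ∃ r ∈ P,
              p ≠ q ∧ r ≠ q ∧ EuclideanGeometry.angle p q r = θ}).ncard := by
  have : Fact (Module.finrank ℝ (EuclideanSpace ℝ (Fin 2)) = 2) := ⟨finrank_euclideanSpace_fin⟩
  refine ⟨360000⁻¹, by norm_num, fun P hP => ?_⟩
  exact (inv_mul_le_iff₀ (by norm_num)).2 (mod_cast distinct_angles_linear_bound_general hP)
end

section
/- There exist absolute constants c > 0 and N₀ such that the following holds. Let B₁, B₂ ⊂ ℝ be finite sets with |B₁| = |B₂| = n ≥ N₀ and with every element of B₁ strictly smaller than every element of B₂. Then there exist a, b ∈ B₁ such that the ratio set { (y − b)/(x − a) : x, y ∈ B₂ } has cardinality at least c·n². -/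
/-!
Let `L` be the set of lines that join a point of `B₁ × B₁` to a point of `B₂ × B₂`, and let `kᵢ(ℓ)`
be the number of points of `Bᵢ × Bᵢ` on a line `ℓ`. Summing `k₁ k₂` over `L` counts almost all of
the `n⁴` pairs of points, so a bound of the form `∑ kᵢ(ℓ)² ≲ r² |L| + n⁴ / r`, with `r` a large
constant, forces `|L| ≳ n⁴`. As every line of `L` passes through one of the `n²` points of
`B₁ × B₁`, some point lies on `≳ n²` of them.

For the bound on `∑ kᵢ²`, cut `Bᵢ` into `r` consecutive blocks of about `n / r` elements. A line
that is neither horizontal nor vertical is a monotone curve, so it meets fewer than `2r` of the `r²`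
resulting cells. If `kᵢ` is large compared with `r`, Cauchy–Schwarz thus provides on the order of
`kᵢ² / r` pairs of distinct points of the line in a common cell. Two distinct points lie on only one
line, so these pairs add up, over all lines, to at most the number of pairs of grid points in a
common cell, which is about `n⁴ / r²`.
-/

open Finset

section LevelPairs

variable {α β : Type*}

/-- The pairs of elements of `S` on which `f` takes the same value, including the diagonal ones. -/
def levelPairs [DecidableEq β] (S : Finset α) (f : α → β) : Finset (α × α) :=
  {p ∈ S ×ˢ S | f p.1 = f p.2}

@[simp]
lemma mem_levelPairs [DecidableEq β] {S : Finset α} {f : α → β} {p : α × α} :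
    p ∈ levelPairs S f ↔ (p.1 ∈ S ∧ p.2 ∈ S) ∧ f p.1 = f p.2 := by
  simp only [levelPairs, mem_filter, mem_product]

lemma card_levelPairs_eq_sum [DecidableEq β] (S : Finset α) (f : α → β) :
    #(levelPairs S f) = ∑ x ∈ S, #{y ∈ S | f x = f y} := by
  simp only [levelPairs, card_filter, sum_product]

lemma card_sq_le_card_mul_card_levelPairs [DecidableEq β] {S : Finset α} {T : Finset β}
    {f : α → β} (hf : Set.MapsTo f S T) : #S ^ 2 ≤ #T * #(levelPairs S f) := by
  have hpairs : #(levelPairs S f) = ∑ b ∈ T, #{x ∈ S | f x = b} ^ 2 := by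
    rw [card_eq_sum_card_fiberwise (f := fun p => f p.1) (t := T)
      fun p hp => hf (mem_levelPairs.1 hp).1.1]
    refine sum_congr rfl fun b _ => ?_
    rw [sq, ← card_product]
    congr 1
    ext p
    simp only [mem_filter, mem_levelPairs, mem_product]
    grind
  rw [hpairs, card_eq_sum_card_fiberwise hf]
  exact sq_sum_le_card_mul_sum_sq

lemma card_levelPairs_le_card_add_card_filter_ne [DecidableEq α] [DecidableEq β] (S : Finset α)
    (f : α → β) : #(levelPairs S f) ≤ #S + #{p ∈ levelPairs S f | p.1 ≠ p.2} := by
  rw [← card_filter_add_card_filter_not (s := levelPairs S f) fun p => p.1 = p.2]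
  gcongr
  refine card_le_card_of_injOn Prod.fst (fun p hp => ?_) fun p hp q hq h => ?_
  · exact (mem_levelPairs.1 (mem_filter.1 hp).1).1.1
  · exact Prod.ext h ((mem_filter.1 hp).2.symm.trans (h.trans (mem_filter.1 hq).2))

-- The sum `f + g` takes fewer than `2 * r` values and fixes both, as `f` and `g` increase together.
lemma card_sq_le_of_monotoneOn_monotoneOn [LinearOrder α] {S : Finset α} {f g : α → ℕ} {r : ℕ}
    (hf : MonotoneOn f S) (hg : MonotoneOn g S) (hfr : ∀ x ∈ S, f x < r) (hgr : ∀ x ∈ S, g x < r) :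
    #S ^ 2 ≤ 2 * r * #(levelPairs S fun x => (f x, g x)) := by
  have hmaps : Set.MapsTo (fun x => f x + g x) S (range (2 * r)) := fun x hx => by
    have := hfr x hx
    have := hgr x hx
    simp only [coe_range, Set.mem_Iio]
    omega
  have hlevel : levelPairs S (fun x => f x + g x) ⊆ levelPairs S fun x => (f x, g x) := by
    rintro ⟨x, y⟩ hxy
    obtain ⟨⟨hx, hy⟩, hsum⟩ := mem_levelPairs.1 hxy
    refine mem_levelPairs.2 ⟨⟨hx, hy⟩, ?_⟩
    dsimp only at hx hy hsum ⊢
    rw [Prod.mk.injEq]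
    rcases le_total x y with h | h
    · have := hf hx hy h
      have := hg hx hy h
      omega
    · have := hf hy hx h
      have := hg hy hx h
      omega
  calc #S ^ 2 ≤ #(range (2 * r)) * #(levelPairs S fun x => f x + g x) :=
        card_sq_le_card_mul_card_levelPairs hmaps
    _ ≤ 2 * r * #(levelPairs S fun x => (f x, g x)) := by
        rw [card_range]
        exact Nat.mul_le_mul_left _ (card_le_card hlevel)

lemma card_sq_le_of_monotoneOn_antitoneOn [LinearOrder α] {S : Finset α} {f g : α → ℕ} {r : ℕ}
    (hf : MonotoneOn f S) (hg : AntitoneOn g S) (hfr : ∀ x ∈ S, f x < r) (hgr : ∀ x ∈ S, g x < r) :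
    #S ^ 2 ≤ 2 * r * #(levelPairs S fun x => (f x, g x)) := by
  have hreflect : MonotoneOn (fun x => r - 1 - g x) S := fun x hx y hy hxy =>
    Nat.sub_le_sub_left (hg hx hy hxy) _
  have hlevel : levelPairs S (fun x => (f x, r - 1 - g x)) ⊆ levelPairs S fun x => (f x, g x) := by
    rintro ⟨x, y⟩ hxy
    simp only [mem_levelPairs, Prod.mk.injEq] at hxy ⊢
    have := hgr x hxy.1.1
    have := hgr y hxy.1.2
    exact ⟨hxy.1, hxy.2.1, by omega⟩
  refine (card_sq_le_of_monotoneOn_monotoneOn hf hreflect hfr fun x hx => ?_).trans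
    (Nat.mul_le_mul_left _ (card_le_card hlevel))
  have := hgr x hx
  omega

end LevelPairs

section Blocks

variable {α : Type*} [LinearOrder α]

lemma monotone_card_filter_lt (B : Finset α) : Monotone fun x => #{y ∈ B | y < x} :=
  fun _ _ hxy => card_le_card <| monotone_filter_right B fun _ _ hz => hz.trans_le hxy

lemma strictMonoOn_card_filter_lt (B : Finset α) : StrictMonoOn (fun x => #{y ∈ B | y < x}) B :=
  fun x hx _ _ hxy => card_lt_card <| (ssubset_iff_of_subset <|
    monotone_filter_right B fun _ _ hz => hz.trans hxy).2
      ⟨x, mem_filter.2 ⟨hx, hxy⟩, fun h => lt_irrefl x (mem_filter.1 h).2⟩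

lemma card_filter_div_eq_le (B : Finset α) {s : ℕ} (hs : 0 < s) (k : ℕ) :
    #{x ∈ B | #{y ∈ B | y < x} / s = k} ≤ s := by
  calc #{x ∈ B | #{y ∈ B | y < x} / s = k} ≤ #(Ico (k * s) (k * s + s)) := by
        refine card_le_card_of_injOn (fun x => #{y ∈ B | y < x}) (fun x hx => ?_)
          ((strictMonoOn_card_filter_lt B).injOn.mono fun x hx => (mem_filter.1 hx).1)
        obtain ⟨-, rfl⟩ := mem_filter.1 hx
        exact mem_Ico.2 ⟨Nat.div_mul_le_self _ _, Nat.lt_div_mul_add hs⟩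
    _ = s := by rw [Nat.card_Ico, Nat.add_sub_cancel_left]

lemma exists_monotone_card_levelPairs_le {B : Finset α} {r : ℕ} (hr : 0 < r) (hrB : r ≤ #B) :
    ∃ c : α → ℕ, Monotone c ∧ (∀ x ∈ B, c x < r) ∧ r * #(levelPairs B c) ≤ 2 * #B ^ 2 := by
  set s := #B / r + 1
  have hs : 0 < s := Nat.succ_pos _
  have hrs : r * s ≤ 2 * #B := by
    have : r * (#B / r) ≤ #B := Nat.mul_div_le _ _
    calc r * s = r * (#B / r) + r := Nat.mul_succ _ _
      _ ≤ 2 * #B := by omega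
  refine ⟨fun x => #{y ∈ B | y < x} / s,
    fun x y h => Nat.div_le_div_right (monotone_card_filter_lt B h), fun x hx => ?_, ?_⟩
  · have hrank : #{y ∈ B | y < x} < #B := card_lt_card (filter_ssubset.2 ⟨x, hx, lt_irrefl x⟩)
    exact (Nat.div_lt_iff_lt_mul hs).2 (hrank.trans (Nat.lt_mul_div_succ _ hr))
  · calc r * #(levelPairs B fun x => #{y ∈ B | y < x} / s) ≤ r * (#B * s) := by
          rw [card_levelPairs_eq_sum, ← smul_eq_mul #B s]
          refine Nat.mul_le_mul_left _ (sum_le_card_nsmul _ _ _ fun x _ => ?_)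
          simpa only [eq_comm] using card_filter_div_eq_le B hs (#{y ∈ B | y < x} / s)
      _ = r * s * #B := by ring
      _ ≤ 2 * #B * #B := Nat.mul_le_mul_right _ hrs
      _ = 2 * #B ^ 2 := by ring

end Blocks

section Lines

variable {K : Type*} [Field K]

/-- The height over `x` of the line `y = m x + t`, which is encoded as the pair `l = (m, t)`;
vertical lines are not represented. -/
def lineEval (l : K × K) (x : K) : K := l.1 * x + l.2

lemma eq_of_lineEval_eq {l l' : K × K} {x y : K} (hxy : x ≠ y)
    (hx : lineEval l x = lineEval l' x) (hy : lineEval l y = lineEval l' y) : l = l' := by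
  simp only [lineEval] at hx hy
  have hslope : l.1 = l'.1 :=
    mul_right_cancel₀ (sub_ne_zero.2 hxy) (by linear_combination hx - hy)
  exact Prod.ext hslope (by linear_combination hx - x * hslope)

variable [DecidableEq K]

lemma sum_card_pairs_on_line_le (E L : Finset (K × K)) :
    ∑ l ∈ L, #{p ∈ E | p.1 ≠ p.2 ∧ (lineEval l p.1, lineEval l p.2) ∈ E} ≤ #E ^ 2 := by
  rw [← card_sigma, sq, ← card_product]
  refine card_le_card_of_injOn (fun z => (z.2, (lineEval z.1 z.2.1, lineEval z.1 z.2.2)))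
    (fun z hz => ?_) ?_
  · obtain ⟨-, hz⟩ := mem_sigma.1 hz
    obtain ⟨hE, -, hE'⟩ := mem_filter.1 hz
    exact mem_product.2 ⟨hE, hE'⟩
  · rintro ⟨l, p⟩ hz ⟨l', p'⟩ - h
    have hne : p.1 ≠ p.2 := (mem_filter.1 (mem_sigma.1 hz).2).2.1
    simp only [Prod.mk.injEq] at h
    obtain ⟨rfl, hx, hy⟩ := h
    rw [eq_of_lineEval_eq hne hx hy]

/-- The abscissae of the points of `B × B` on the line `l`; their number is the number of points of
the grid `B × B` on `l`. -/
def gridAbscissae (B : Finset K) (l : K × K) : Finset K := {x ∈ B | lineEval l x ∈ B}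

lemma mem_gridAbscissae {B : Finset K} {l : K × K} {x : K} :
    x ∈ gridAbscissae B l ↔ x ∈ B ∧ lineEval l x ∈ B := mem_filter

/-- The slopes of the lines, neither horizontal nor vertical, that join `p` to a point of `B × B`.
The condition `q.1 ≠ p.1` keeps out the junk value of a division by zero. -/
def slopesFrom (p : K × K) (B : Finset K) : Finset K :=
  {q ∈ B ×ˢ B | q.1 ≠ p.1 ∧ q.2 ≠ p.2}.image fun q => (q.2 - p.2) / (q.1 - p.1)

/-- The lines, neither horizontal nor vertical, that join a point of `B₁ × B₁` to a point of
`B₂ × B₂`. -/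
def joiningLines (B₁ B₂ : Finset K) : Finset (K × K) :=
  (B₁ ×ˢ B₁).biUnion fun p => (slopesFrom p B₂).image fun m => (m, p.2 - m * p.1)

lemma fst_ne_zero_of_mem_joiningLines {B₁ B₂ : Finset K} {l : K × K}
    (hl : l ∈ joiningLines B₁ B₂) : l.1 ≠ 0 := by
  simp only [joiningLines, slopesFrom, mem_biUnion, mem_image, mem_filter] at hl
  obtain ⟨p, -, -, ⟨q, ⟨-, hx, hy⟩, rfl⟩, rfl⟩ := hl
  exact div_ne_zero (sub_ne_zero.2 hy) (sub_ne_zero.2 hx)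

lemma exists_mem_joiningLines {B₁ B₂ : Finset K} {a b x y : K} (ha : a ∈ B₁) (hb : b ∈ B₁)
    (hx : x ∈ B₂) (hy : y ∈ B₂) (hax : a ≠ x) (hby : b ≠ y) :
    ∃ l ∈ joiningLines B₁ B₂, lineEval l a = b ∧ lineEval l x = y := by
  set m := (y - b) / (x - a)
  have hm : m ∈ slopesFrom (a, b) B₂ :=
    mem_image.2 ⟨(x, y), mem_filter.2 ⟨mk_mem_product hx hy, hax.symm, hby.symm⟩, rfl⟩
  have hmul : m * (x - a) = y - b := div_mul_cancel₀ _ (sub_ne_zero.2 hax.symm)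
  refine ⟨(m, b - m * a), mem_biUnion.2 ⟨(a, b), mk_mem_product ha hb, mem_image_of_mem _ hm⟩,
    ?_, ?_⟩ <;> simp only [lineEval]
  · ring
  · linear_combination hmul

lemma card_slopesFrom_le_ncard {A B : Finset K} (hAB : A ⊆ B) (a b : K) :
    #(slopesFrom (a, b) A) ≤
      {s : K | ∃ x ∈ B, ∃ y ∈ B, x ≠ a ∧ s = (y - b) / (x - a)}.ncard := by
  have hfin : {s : K | ∃ x ∈ B, ∃ y ∈ B, x ≠ a ∧ s = (y - b) / (x - a)}.Finite := by
    refine ((B ×ˢ B).image fun q => (q.2 - b) / (q.1 - a)).finite_toSet.subset ?_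
    rintro _ ⟨x, hx, y, hy, -, rfl⟩
    exact mem_image_of_mem _ (mk_mem_product hx hy)
  rw [← Set.ncard_coe_finset]
  refine Set.ncard_le_ncard (fun s hs => ?_) hfin
  obtain ⟨q, hq, rfl⟩ := mem_image.1 hs
  obtain ⟨hqA, hqa, -⟩ := mem_filter.1 hq
  obtain ⟨hx, hy⟩ := mem_product.1 hqA
  exact ⟨q.1, hAB hx, q.2, hAB hy, hqa, rfl⟩

lemma card_joiningLines_le (B₁ B₂ : Finset K) :
    #(joiningLines B₁ B₂) ≤ ∑ p ∈ B₁ ×ˢ B₁, #(slopesFrom p B₂) :=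
  card_biUnion_le.trans (sum_le_sum fun _ _ => card_image_le)

lemma sq_card_filter_ne_le_sum_joiningLines (B₁ B₂ : Finset K) :
    #{z ∈ B₁ ×ˢ B₂ | z.1 ≠ z.2} ^ 2 ≤
      ∑ l ∈ joiningLines B₁ B₂, #(gridAbscissae B₁ l) * #(gridAbscissae B₂ l) := by
  simp only [← card_product]
  rw [← card_sigma, sq, ← card_product]
  refine card_le_card_of_surjOn
    (fun z => (z.2, (lineEval z.1 z.2.1, lineEval z.1 z.2.2))) ?_
  rintro ⟨⟨a, x⟩, b, y⟩ hz
  simp only [coe_product, Set.mem_prod, mem_coe, mem_filter, mem_product] at hz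
  obtain ⟨⟨⟨ha, hx⟩, hax⟩, ⟨hb, hy⟩, hby⟩ := hz
  obtain ⟨l, hl, rfl, rfl⟩ := exists_mem_joiningLines ha hb hx hy hax hby
  exact ⟨⟨l, a, x⟩, mem_sigma.2 ⟨hl, mk_mem_product (mem_gridAbscissae.2 ⟨ha, hb⟩)
    (mem_gridAbscissae.2 ⟨hx, hy⟩)⟩, rfl⟩

end Lines

lemma card_mul_card_le_card_filter_ne_add {α : Type*} [DecidableEq α] (B₁ B₂ : Finset α) :
    #B₁ * #B₂ ≤ #{z ∈ B₁ ×ˢ B₂ | z.1 ≠ z.2} + #B₁ := by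
  rw [← card_product, ← card_filter_add_card_filter_not (s := B₁ ×ˢ B₂) fun z => z.1 ≠ z.2]
  gcongr
  refine card_le_card_of_injOn Prod.fst (fun z hz => ?_) fun z hz w hw h => ?_
  · exact (mem_product.1 (mem_filter.1 hz).1).1
  · have hz' := not_not.1 (mem_filter.1 hz).2
    have hw' := not_not.1 (mem_filter.1 hw).2
    exact Prod.ext h (hz'.symm.trans (h.trans hw'))

section Incidences

variable {K : Type*} [Field K] [LinearOrder K] [IsStrictOrderedRing K]

lemma sq_card_gridAbscissae_le {B : Finset K} {r : ℕ} {c : K → ℕ} (hc : Monotone c)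
    (hcr : ∀ x ∈ B, c x < r) {l : K × K} (hl : l.1 ≠ 0) :
    #(gridAbscissae B l) ^ 2 ≤ 4 * r ^ 2 + 4 * r *
      #{p ∈ levelPairs B c | p.1 ≠ p.2 ∧ (lineEval l p.1, lineEval l p.2) ∈ levelPairs B c} := by
  set S := gridAbscissae B l with hS
  set P := levelPairs S fun x => (c x, c (lineEval l x))
  set E := levelPairs B c with hE
  have hfr : ∀ x ∈ S, c x < r := fun x hx => hcr x (mem_gridAbscissae.1 hx).1
  have hgr : ∀ x ∈ S, c (lineEval l x) < r := fun x hx => hcr _ (mem_gridAbscissae.1 hx).2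
  have hstair : #S ^ 2 ≤ 2 * r * #P := by
    rcases hl.lt_or_gt with hneg | hpos
    · have hanti : Antitone (lineEval l) := fun x y hxy =>
        add_le_add_left (mul_le_mul_of_nonpos_left hxy hneg.le) _
      exact card_sq_le_of_monotoneOn_antitoneOn (hc.monotoneOn _)
        ((hc.comp_antitone hanti).antitoneOn _) hfr hgr
    · have hmono : Monotone (lineEval l) := fun x y hxy =>
        add_le_add_left (mul_le_mul_of_nonneg_left hxy hpos.le) _
      exact card_sq_le_of_monotoneOn_monotoneOn (hc.monotoneOn _)
        ((hc.comp hmono).monotoneOn _) hfr hgr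
  have hdiag : #P ≤ #S + #{p ∈ P | p.1 ≠ p.2} := card_levelPairs_le_card_add_card_filter_ne _ _
  have hcell : #{p ∈ P | p.1 ≠ p.2} ≤
      #{p ∈ E | p.1 ≠ p.2 ∧ (lineEval l p.1, lineEval l p.2) ∈ E} := by
    refine card_le_card fun p hp => ?_
    simp only [P, hS, hE, mem_filter, mem_levelPairs, mem_gridAbscissae, Prod.mk.injEq] at hp ⊢
    tauto
  generalize #{p ∈ E | p.1 ≠ p.2 ∧ (lineEval l p.1, lineEval l p.2) ∈ E} = e at hcell ⊢
  have hquad : #S ^ 2 ≤ 2 * r * (#S + e) :=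
    hstair.trans (Nat.mul_le_mul_left _ (hdiag.trans (Nat.add_le_add_left hcell _)))
  -- AM-GM: `4 r |S| ≤ |S|² + 4 r²` absorbs the linear term.
  zify at hquad ⊢
  linarith [sq_nonneg ((#S : ℤ) - 2 * r)]

theorem sum_sq_card_gridAbscissae_le {B : Finset K} {r : ℕ} (hr : 0 < r) (hrB : r ≤ #B)
    {L : Finset (K × K)} (hL : ∀ l ∈ L, l.1 ≠ 0) :
    r * ∑ l ∈ L, #(gridAbscissae B l) ^ 2 ≤ 4 * r ^ 3 * #L + 16 * #B ^ 4 := by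
  obtain ⟨c, hc, hcr, hlevel⟩ := exists_monotone_card_levelPairs_le hr hrB
  set E := levelPairs B c
  have hpairs := sum_card_pairs_on_line_le E L
  calc r * ∑ l ∈ L, #(gridAbscissae B l) ^ 2
      ≤ r * ∑ l ∈ L, (4 * r ^ 2 + 4 * r *
          #{p ∈ E | p.1 ≠ p.2 ∧ (lineEval l p.1, lineEval l p.2) ∈ E}) :=
        Nat.mul_le_mul_left _ (sum_le_sum fun l hl => sq_card_gridAbscissae_le hc hcr (hL l hl))
    _ ≤ r * (#L * (4 * r ^ 2) + 4 * r * #E ^ 2) := by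
        rw [sum_add_distrib, sum_const, smul_eq_mul, ← mul_sum]
        gcongr
    _ = 4 * r ^ 3 * #L + 4 * (r * #E) ^ 2 := by ring
    _ ≤ 4 * r ^ 3 * #L + 4 * (2 * #B ^ 2) ^ 2 := by gcongr
    _ = 4 * r ^ 3 * #L + 16 * #B ^ 4 := by ring

theorem card_pow_four_le_card_joiningLines {B₁ B₂ : Finset K} (hcard : #B₁ = #B₂)
    (hn : 32 ≤ #B₁) : #B₁ ^ 4 ≤ 2 ^ 14 * #(joiningLines B₁ B₂) := by
  set L := joiningLines B₁ B₂
  set D := #{z ∈ B₁ ×ˢ B₂ | z.1 ≠ z.2}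
  have hL : ∀ l ∈ L, l.1 ≠ 0 := fun _ => fst_ne_zero_of_mem_joiningLines
  have hsq₁ := sum_sq_card_gridAbscissae_le (r := 32) (by norm_num) hn hL
  have hsq₂ := sum_sq_card_gridAbscissae_le (r := 32) (by norm_num) (hcard ▸ hn) hL
  have hjoin : 2 * D ^ 2 ≤
      ∑ l ∈ L, #(gridAbscissae B₁ l) ^ 2 + ∑ l ∈ L, #(gridAbscissae B₂ l) ^ 2 := by
    rw [← sum_add_distrib]
    refine (Nat.mul_le_mul_left 2 (sq_card_filter_ne_le_sum_joiningLines B₁ B₂)).trans ?_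
    rw [mul_sum]
    refine sum_le_sum fun l _ => ?_
    rw [← mul_assoc]
    exact two_mul_le_add_sq _ _
  have hD : 31 * #B₁ ^ 2 ≤ 32 * D := by
    have := card_mul_card_le_card_filter_ne_add B₁ B₂
    rw [← hcard] at this
    nlinarith
  have hDsq : (31 * #B₁ ^ 2) ^ 2 ≤ (32 * D) ^ 2 := Nat.pow_le_pow_left hD 2
  rw [← hcard] at hsq₂
  linarith

theorem exists_card_sq_le_card_slopesFrom {B₁ B₂ : Finset K} (hcard : #B₁ = #B₂)
    (hn : 32 ≤ #B₁) : ∃ p ∈ B₁ ×ˢ B₁, #B₁ ^ 2 ≤ 2 ^ 14 * #(slopesFrom p B₂) := by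
  have hB₁ : B₁.Nonempty := card_pos.1 (by omega)
  refine exists_le_of_sum_le (hB₁.product hB₁) ?_
  calc ∑ _p ∈ B₁ ×ˢ B₁, #B₁ ^ 2 = #B₁ ^ 4 := by
        rw [sum_const, card_product, smul_eq_mul]
        ring
    _ ≤ 2 ^ 14 * #(joiningLines B₁ B₂) := card_pow_four_le_card_joiningLines hcard hn
    _ ≤ 2 ^ 14 * ∑ p ∈ B₁ ×ˢ B₁, #(slopesFrom p B₂) :=
        Nat.mul_le_mul_left _ (card_joiningLines_le B₁ B₂)
    _ = ∑ p ∈ B₁ ×ˢ B₁, 2 ^ 14 * #(slopesFrom p B₂) := mul_sum ..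

theorem point_with_many_directions_general {B₁ B₂ : Finset K} {n : ℕ} (hn : 32 ≤ n)
    (h₁ : n ≤ #B₁) (h₂ : n ≤ #B₂) :
    ∃ a ∈ B₁, ∃ b ∈ B₁, 1 / 2 ^ 14 * (n : ℝ) ^ 2 ≤
      {s : K | ∃ x ∈ B₂, ∃ y ∈ B₂, x ≠ a ∧ s = (y - b) / (x - a)}.ncard := by
  obtain ⟨A₁, hA₁, rfl⟩ := exists_subset_card_eq h₁
  obtain ⟨A₂, hA₂, hcard⟩ := exists_subset_card_eq h₂
  obtain ⟨⟨a, b⟩, hab, hslopes⟩ := exists_card_sq_le_card_slopesFrom hcard.symm hn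
  obtain ⟨ha, hb⟩ := mem_product.1 hab
  refine ⟨a, hA₁ ha, b, hA₁ hb, ?_⟩
  have hratios := hslopes.trans (Nat.mul_le_mul_left _ (card_slopesFrom_le_ncard hA₂ a b))
  rify at hratios
  linarith

end Incidences

/-- There are absolute constants `c > 0` and `N₀` such that if `B₁, B₂ ⊆ ℝ` are finite sets
with `|B₁| = |B₂| = n ≥ N₀` and every element of `B₁` is smaller than every element of `B₂`,
then there exist `a, b ∈ B₁` such that the ratio set `{(y - b)/(x - a) : x, y ∈ B₂}` has
cardinality at least `c·n²`. -/
theorem point_with_many_directions :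
    ∃ c : ℝ, 0 < c ∧ ∃ N₀ : ℕ,
      ∀ B₁ B₂ : Finset ℝ, B₁.card = B₂.card → N₀ ≤ B₁.card →
        (∀ x ∈ B₁, ∀ y ∈ B₂, x < y) →
        ∃ a ∈ B₁, ∃ b ∈ B₁,
          c * (B₁.card : ℝ) ^ 2 ≤
            ({s : ℝ | ∃ x ∈ B₂, ∃ y ∈ B₂, s = (y - b) / (x - a)}).ncard := by
  refine ⟨1 / 2 ^ 14, by norm_num, 32, fun B₁ B₂ hcard hn hlt => ?_⟩
  obtain ⟨a, ha, b, hb, h⟩ := point_with_many_directions_general hn le_rfl hcard.le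
  have hne : ∀ x ∈ B₂, x ≠ a := fun x hx => (hlt a ha x hx).ne'
  exact ⟨a, ha, b, hb, h.trans_eq (by grind)⟩
end
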